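/- arXiv:1909.05968 — 6 statements merged into one kernel-verified Lean document; each statement's English description precedes it below -/
import Mathlib

section
/- Every connector state in ⊤ ∪ ⊥ of the joining A(U) of a union U = U(A_0,...,A_n) has at most two incoming and at most two outgoing transitions. Consequently, if g ≥ 2, U is g-grade, and the initial state of every TS of U has at most g−1 incoming and at most g−1 outgoing transitions, then A(U) is g-grade. -/
/-!
The connector states form a path-like gadget, so their transitions can be listed.

* A state `⊥_b` is entered only from `⊥_{b-1}` and `⊥_{b+1}`, and for each of these two
  neighbours by at most one event; an incoming transition is therefore determined by the truth
  value of "its source lies below `b`". An outgoing one is determined by the truth value of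
  "its event is a `⊙`, or is `⊗_j` with `4 j = b`".
* For `⊤_{i,k}` the (at most two) incoming and outgoing transitions are written down explicitly.
* A state `s` of a component `A_i` keeps its transitions in `A_i`; the joining adds one incoming
  and one outgoing transition, both labelled `⊕_i`, exactly when `s` is the initial state
  (`inDeg_inl_le`, `outDeg_inl_le`). The bound `g - 1` at initial states leaves room for it.
-/

namespace PetriNets

/-- The eight boolean interactions. -/
inductive Interaction : Type
  | nop | inp | out | set | res | swap | used | free
  deriving DecidableEq

/-- The partial function on `{0,1}` (encoded as `Bool`) denoted by an interaction. -/
def Interaction.apply : Interaction → Bool → Option Bool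
  | .nop, x => some x
  | .inp, x => if x then some false else none
  | .out, x => if x then none else some true
  | .set, _ => some true
  | .res, _ => some false
  | .swap, x => some (!x)
  | .used, x => if x then some true else none
  | .free, x => if x then none else some false

/-- A transition system with states `S`, events `E`, a partial transition
function and an initial state. -/
structure TS (S E : Type) where
  delta : S → E → Option S
  init : S

/-- A `τ`-region of a transition system. -/
structure Region (τ : Set Interaction) {S E : Type} (A : TS S E) where
  sup : S → Bool
  sig : E → Interaction
  sig_mem : ∀ e : E, sig e ∈ τ
  consistent : ∀ (s : S) (e : E) (s' : S), A.delta s e = some s' →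
    (sig e).apply (sup s) = some (sup s')

/-- The state separation property. -/
def SSP (τ : Set Interaction) {S E : Type} (A : TS S E) : Prop :=
  ∀ s s' : S, s ≠ s' → ∃ R : Region τ A, R.sup s ≠ R.sup s'

/-- The event state separation property. -/
def ESSP (τ : Set Interaction) {S E : Type} (A : TS S E) : Prop :=
  ∀ (s : S) (e : E), A.delta s e = none →
    ∃ R : Region τ A, (R.sig e).apply (R.sup s) = none

/-- `τ`-feasibility: both the `τ`-SSP and the `τ`-ESSP. -/
def Feasible (τ : Set Interaction) {S E : Type} (A : TS S E) : Prop :=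
  SSP τ A ∧ ESSP τ A

/-- A union of transition systems with pairwise disjoint states (disjointness is
enforced by the sigma type of states) over a common event alphabet. -/
def Union (ι : Type) (S : ι → Type) (E : Type) : Type := (i : ι) → TS (S i) E

/-- A `τ`-region of a union: its restriction to every component is a region. -/
structure URegion (τ : Set Interaction) {ι : Type} {S : ι → Type} {E : Type}
    (U : Union ι S E) where
  sup : (Σ i : ι, S i) → Bool
  sig : E → Interaction
  sig_mem : ∀ e : E, sig e ∈ τ
  consistent : ∀ (i : ι) (s : S i) (e : E) (s' : S i), (U i).delta s e = some s' →
    (sig e).apply (sup ⟨i, s⟩) = some (sup ⟨i, s'⟩)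

/-- SSP for unions: distinct states of a common component are separable. -/
def USSP (τ : Set Interaction) {ι : Type} {S : ι → Type} {E : Type}
    (U : Union ι S E) : Prop :=
  ∀ (i : ι) (s s' : S i), s ≠ s' → ∃ R : URegion τ U, R.sup ⟨i, s⟩ ≠ R.sup ⟨i, s'⟩

/-- ESSP for unions: every event is inhibitable at every state where it does not occur. -/
def UESSP (τ : Set Interaction) {ι : Type} {S : ι → Type} {E : Type}
    (U : Union ι S E) : Prop :=
  ∀ (e : E) (i : ι) (s : S i), (U i).delta s e = none →
    ∃ R : URegion τ U, (R.sig e).apply (R.sup ⟨i, s⟩) = none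

/-- States of the joining `A(U)`: the states of the union together with the
connector states `⊥_0, …, ⊥_{4n}` and `⊤_{i,1}, ⊤_{i,2}, ⊤_{i,3}` (encoded as
`(i, 0), (i, 1), (i, 2)`). -/
abbrev JState (n : ℕ) (S : Fin n → Type) : Type :=
  (Σ i : Fin n, S i) ⊕ (Fin (4 * n + 1) ⊕ (Fin n × Fin 3))

/-- Events of the joining: the events of the union together with the fresh
events `⊙_i, ⊗_i, ⊖_i, ⊕_i` (encoded as `(i, 0), (i, 1), (i, 2), (i, 3)`). -/
abbrev JEvent (n : ℕ) (E : Type) : Type := E ⊕ (Fin n × Fin 4)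

open Classical in
/-- The joining `A(U)` of a union `U = U(A_0, …, A_{n-1})`. -/
noncomputable def joining {n : ℕ} {S : Fin n → Type} {E : Type} (U : Union (Fin n) S E) :
    TS (JState n S) (JEvent n E) where
  init := Sum.inr (Sum.inl ⟨0, by omega⟩)
  delta := fun st ev =>
    match st, ev with
    | Sum.inl ⟨i, s⟩, Sum.inl e => ((U i).delta s e).map (fun s' => Sum.inl ⟨i, s'⟩)
    | Sum.inl ⟨i, s⟩, Sum.inr jc =>
        if i = jc.1 ∧ jc.2 = (3 : Fin 4) ∧ s = (U i).init
        then some (Sum.inr (Sum.inr (jc.1, (2 : Fin 3)))) else none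
    | Sum.inr (Sum.inl _), Sum.inl _ => none
    | Sum.inr (Sum.inl bs), Sum.inr jc =>
        if jc.2 = (1 : Fin 4) then
          -- ⊗ : ⊥_{4i} ↔ ⊥_{4i+1} and ⊥_{4i+3} ↔ ⊥_{4i+4}
          if bs.val = 4 * jc.1.val then
            some (Sum.inr (Sum.inl ⟨4 * jc.1.val + 1, by have := jc.1.isLt; omega⟩))
          else if bs.val = 4 * jc.1.val + 1 then
            some (Sum.inr (Sum.inl ⟨4 * jc.1.val, by have := jc.1.isLt; omega⟩))
          else if bs.val = 4 * jc.1.val + 3 then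
            some (Sum.inr (Sum.inl ⟨4 * jc.1.val + 4, by have := jc.1.isLt; omega⟩))
          else if bs.val = 4 * jc.1.val + 4 then
            some (Sum.inr (Sum.inl ⟨4 * jc.1.val + 3, by have := jc.1.isLt; omega⟩))
          else none
        else if jc.2 = (0 : Fin 4) then
          -- ⊙ : ⊥_{4i+1} → ⊥_{4i+2} and ⊥_{4i+2} ↔ ⊥_{4i+3}
          if bs.val = 4 * jc.1.val + 1 then
            some (Sum.inr (Sum.inl ⟨4 * jc.1.val + 2, by have := jc.1.isLt; omega⟩))
          else if bs.val = 4 * jc.1.val + 2 then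
            some (Sum.inr (Sum.inl ⟨4 * jc.1.val + 3, by have := jc.1.isLt; omega⟩))
          else if bs.val = 4 * jc.1.val + 3 then
            some (Sum.inr (Sum.inl ⟨4 * jc.1.val + 2, by have := jc.1.isLt; omega⟩))
          else none
        else if jc.2 = (2 : Fin 4) then
          -- ⊖ : ⊥_{4i+2} → ⊤_{i,1}
          if bs.val = 4 * jc.1.val + 2 then
            some (Sum.inr (Sum.inr (jc.1, (0 : Fin 3))))
          else none
        else none
    | Sum.inr (Sum.inr _), Sum.inl _ => none
    | Sum.inr (Sum.inr jt), Sum.inr jc =>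
        if jc.1 = jt.1 then
          if jc.2 = (2 : Fin 4) then
            -- ⊖ : ⊤_{i,1} ↔ ⊤_{i,2}
            if jt.2 = (0 : Fin 3) then some (Sum.inr (Sum.inr (jt.1, (1 : Fin 3))))
            else if jt.2 = (1 : Fin 3) then some (Sum.inr (Sum.inr (jt.1, (0 : Fin 3))))
            else none
          else if jc.2 = (0 : Fin 4) then
            -- ⊙ : ⊤_{i,2} ↔ ⊤_{i,3}
            if jt.2 = (1 : Fin 3) then some (Sum.inr (Sum.inr (jt.1, (2 : Fin 3))))
            else if jt.2 = (2 : Fin 3) then some (Sum.inr (Sum.inr (jt.1, (1 : Fin 3))))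
            else none
          else if jc.2 = (3 : Fin 4) then
            -- ⊕ : ⊤_{i,3} ↔ s^i_0
            if jt.2 = (2 : Fin 3) then some (Sum.inl ⟨jt.1, (U jt.1).init⟩)
            else none
          else none
        else none

/-- Number of outgoing transitions at a state. -/
noncomputable def outDeg {S E : Type} (A : TS S E) (s : S) : ℕ :=
  Set.ncard {e : E | (A.delta s e).isSome = true}

/-- Number of incoming transitions at a state. -/
noncomputable def inDeg {S E : Type} (A : TS S E) (s : S) : ℕ :=
  Set.ncard {p : S × E | A.delta p.1 p.2 = some s}

/-- A transition system is `g`-grade if every state has at most `g` incoming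
and at most `g` outgoing transitions. -/
def Grade {S E : Type} (A : TS S E) (g : ℕ) : Prop :=
  ∀ s : S, inDeg A s ≤ g ∧ outDeg A s ≤ g

/-- A union is `g`-grade if all of its transition systems are. -/
def UGrade {ι : Type} {S : ι → Type} {E : Type} (U : Union ι S E) (g : ℕ) : Prop :=
  ∀ i : ι, Grade (U i) g

section Degrees

variable {n : ℕ} {S : Fin n → Type} {E : Type}

theorem ncard_le_two_of_injOn {α : Type*} {s : Set α} (f : α → Prop)
    (hf : ∀ a ∈ s, ∀ b ∈ s, (f a ↔ f b) → a = b) : s.ncard ≤ 2 := by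
  have h := Set.ncard_le_ncard_of_injOn (s := s) (t := (Set.univ : Set Prop)) f
    (fun _ _ => Set.mem_univ _) (fun a ha b hb hab => hf a ha b hb (by rw [hab]))
    Set.finite_univ
  simpa [Set.ncard_univ] using h

theorem ncard_le_two_of_subset_pair {α : Type*} {s : Set α} (a b : α)
    (h : ∀ x ∈ s, x = a ∨ x = b) : s.ncard ≤ 2 :=
  (Set.ncard_le_ncard (t := {a, b}) (fun x hx => by simpa using h x hx)).trans
    ((Set.ncard_insert_le a {b}).trans (by simp))

/-- The events enabled at `⊥_b`. -/
theorem enabled_bot (U : Union (Fin n) S E) (b : Fin (4 * n + 1)) (e : JEvent n E)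
    (h : ((joining U).delta (Sum.inr (Sum.inl b)) e).isSome = true) :
    ∃ (j : Fin n) (c : Fin 4), e = Sum.inr (j, c) ∧
      ((c = 1 ∧ (b.val = 4 * j.val ∨ b.val = 4 * j.val + 1 ∨ b.val = 4 * j.val + 3 ∨
          b.val = 4 * j.val + 4)) ∨
        (c = 0 ∧ (b.val = 4 * j.val + 1 ∨ b.val = 4 * j.val + 2 ∨ b.val = 4 * j.val + 3)) ∨
        (c = 2 ∧ b.val = 4 * j.val + 2)) := by
  obtain e | ⟨j, c⟩ := e
  · simp [joining] at h
  · refine ⟨j, c, rfl, ?_⟩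
    simp only [joining] at h
    split_ifs at h <;> simp_all

/-- The transitions entering `⊥_b`. -/
theorem pred_bot (U : Union (Fin n) S E) (b : Fin (4 * n + 1)) (p : JState n S × JEvent n E)
    (h : (joining U).delta p.1 p.2 = some (Sum.inr (Sum.inl b))) :
    ∃ (a : Fin (4 * n + 1)) (j : Fin n) (c : Fin 4),
      p = (Sum.inr (Sum.inl a), Sum.inr (j, c)) ∧
      ((c = 1 ∧ ((a.val = 4 * j.val ∧ b.val = 4 * j.val + 1) ∨
          (a.val = 4 * j.val + 1 ∧ b.val = 4 * j.val) ∨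
          (a.val = 4 * j.val + 3 ∧ b.val = 4 * j.val + 4) ∨
          (a.val = 4 * j.val + 4 ∧ b.val = 4 * j.val + 3))) ∨
        (c = 0 ∧ ((a.val = 4 * j.val + 1 ∧ b.val = 4 * j.val + 2) ∨
          (a.val = 4 * j.val + 2 ∧ b.val = 4 * j.val + 3) ∨
          (a.val = 4 * j.val + 3 ∧ b.val = 4 * j.val + 2)))) := by
  obtain ⟨⟨i, s⟩ | a | t, e | ⟨j, c⟩⟩ := p
  · simp [joining] at h
  · simp [joining] at h
  · simp [joining] at h
  · refine ⟨a, j, c, rfl, ?_⟩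
    simp only [joining] at h
    split_ifs at h <;>
      simp only [Option.some.injEq, Sum.inr.injEq, Sum.inl.injEq, reduceCtorEq] at h <;>
      subst h <;> simp_all
  · simp [joining] at h
  · simp only [joining] at h
    split_ifs at h <;> simp_all

theorem outDeg_bot_le (U : Union (Fin n) S E) (b : Fin (4 * n + 1)) :
    outDeg (joining U) (Sum.inr (Sum.inl b)) ≤ 2 := by
  refine ncard_le_two_of_injOn
    (fun e => ∃ (j : Fin n) (c : Fin 4), e = Sum.inr (j, c) ∧ (c = 0 ∨ b.val = 4 * j.val)) ?_
  intro e he e' he' hiff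
  obtain ⟨j, c, rfl, h⟩ := enabled_bot U b e he
  obtain ⟨j', c', rfl, h'⟩ := enabled_bot U b e' he'
  have hiff' : (c = 0 ∨ b.val = 4 * j.val) ↔ (c' = 0 ∨ b.val = 4 * j'.val) := by
    simpa using hiff
  have : j = j' ∧ c = c' := by
    rw [Fin.ext_iff, Fin.ext_iff]
    simp only [Fin.ext_iff, Fin.val_zero, Fin.val_one, Fin.val_two] at h h' hiff'
    omega
  rw [this.1, this.2]

theorem inDeg_bot_le (U : Union (Fin n) S E) (b : Fin (4 * n + 1)) :
    inDeg (joining U) (Sum.inr (Sum.inl b)) ≤ 2 := by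
  refine ncard_le_two_of_injOn
    (fun p => ∃ a : Fin (4 * n + 1), p.1 = Sum.inr (Sum.inl a) ∧ a.val < b.val) ?_
  intro p hp p' hp' hiff
  obtain ⟨a, j, c, rfl, h⟩ := pred_bot U b p hp
  obtain ⟨a', j', c', rfl, h'⟩ := pred_bot U b p' hp'
  have hiff' : a.val < b.val ↔ a'.val < b.val := by simpa using hiff
  have : a = a' ∧ j = j' ∧ c = c' := by
    rw [Fin.ext_iff, Fin.ext_iff, Fin.ext_iff]
    simp only [Fin.ext_iff, Fin.val_zero, Fin.val_one] at h h'
    omega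
  rw [this.1, this.2.1, this.2.2]

theorem outDeg_top_le (U : Union (Fin n) S E) (i : Fin n) (k : Fin 3) :
    outDeg (joining U) (Sum.inr (Sum.inr (i, k))) ≤ 2 := by
  -- only `⊙_i`, `⊕_i` can occur at `⊤_{i,3}`, and only `⊙_i`, `⊖_i` at `⊤_{i,1}`, `⊤_{i,2}`
  refine ncard_le_two_of_subset_pair (Sum.inr (i, 0))
    (Sum.inr (i, if k = 2 then 3 else 2)) ?_
  rintro (e | ⟨j, c⟩) h
  · simp [joining] at h
  · simp only [joining, Set.mem_ofPred_eq] at h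
    split_ifs at h <;> simp_all

theorem inDeg_top_le (U : Union (Fin n) S E) (i : Fin n) (k : Fin 3) :
    inDeg (joining U) (Sum.inr (Sum.inr (i, k))) ≤ 2 := by
  have hi := i.isLt
  fin_cases k
  · refine ncard_le_two_of_subset_pair
      (Sum.inr (Sum.inl ⟨4 * i.val + 2, by omega⟩), Sum.inr (i, 2))
      (Sum.inr (Sum.inr (i, 1)), Sum.inr (i, 2)) ?_
    rintro ⟨⟨i', s⟩ | a | ⟨i', k'⟩, e | ⟨j, c⟩⟩ h <;>
      simp only [joining, Set.mem_ofPred_eq] at h <;>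
      (try split_ifs at h) <;> simp_all
    all_goals grind
  · refine ncard_le_two_of_subset_pair
      (Sum.inr (Sum.inr (i, 0)), Sum.inr (i, 2))
      (Sum.inr (Sum.inr (i, 2)), Sum.inr (i, 0)) ?_
    rintro ⟨⟨i', s⟩ | a | ⟨i', k'⟩, e | ⟨j, c⟩⟩ h <;>
      simp only [joining, Set.mem_ofPred_eq] at h <;>
      (try split_ifs at h) <;> simp_all
  · refine ncard_le_two_of_subset_pair
      (Sum.inr (Sum.inr (i, 1)), Sum.inr (i, 0))
      (Sum.inl ⟨i, (U i).init⟩, Sum.inr (i, 3)) ?_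
    rintro ⟨⟨i', s⟩ | a | ⟨i', k'⟩, e | ⟨j, c⟩⟩ h <;>
      simp only [joining, Set.mem_ofPred_eq] at h <;>
      (try split_ifs at h) <;> simp_all
    all_goals grind

open Classical in
theorem outDeg_inl_le [Fintype E] (U : Union (Fin n) S E) (i : Fin n) (s : S i) :
    outDeg (joining U) (Sum.inl ⟨i, s⟩) ≤
      outDeg (U i) s + if s = (U i).init then 1 else 0 := by
  have hsub : {e : JEvent n E | ((joining U).delta (Sum.inl ⟨i, s⟩) e).isSome = true} ⊆
      Sum.inl '' {e : E | ((U i).delta s e).isSome = true} ∪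
        (if s = (U i).init then {Sum.inr (i, 3)} else ∅) := by
    rintro (e | ⟨j, c⟩) h
    · left
      simpa [joining] using h
    · right
      simp only [joining, Set.mem_ofPred_eq] at h
      split_ifs at h <;> simp_all
  refine (Set.ncard_le_ncard hsub (Set.toFinite _)).trans ((Set.ncard_union_le _ _).trans ?_)
  refine Nat.add_le_add (Set.ncard_image_le (Set.toFinite _)) ?_
  split_ifs <;> simp

open Classical in
theorem inDeg_inl_le [∀ i, Fintype (S i)] [Fintype E] (U : Union (Fin n) S E) (i : Fin n)
    (s : S i) :
    inDeg (joining U) (Sum.inl ⟨i, s⟩) ≤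
      inDeg (U i) s + if s = (U i).init then 1 else 0 := by
  have hsub : {p : JState n S × JEvent n E |
        (joining U).delta p.1 p.2 = some (Sum.inl ⟨i, s⟩)} ⊆
      (fun p : S i × E => ((Sum.inl ⟨i, p.1⟩, Sum.inl p.2) : JState n S × JEvent n E)) ''
          {p : S i × E | (U i).delta p.1 p.2 = some s} ∪
        (if s = (U i).init then {(Sum.inr (Sum.inr (i, 2)), Sum.inr (i, 3))} else ∅) := by
    rintro ⟨⟨i', s'⟩ | a | ⟨i', k'⟩, e | ⟨j, c⟩⟩ h
    · left
      simp only [joining, Set.mem_ofPred_eq, Option.map_eq_some_iff] at h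
      obtain ⟨t, ht, heq⟩ := h
      cases heq
      exact ⟨(s', e), ht, rfl⟩
    · simp [joining] at h
    · simp [joining] at h
    · simp only [joining, Set.mem_ofPred_eq] at h
      split_ifs at h <;> simp_all
    · simp [joining] at h
    · right
      simp only [joining, Set.mem_ofPred_eq] at h
      split_ifs at h
      all_goals try (simp at h; done)
      cases h
      simp_all
  refine (Set.ncard_le_ncard hsub (Set.toFinite _)).trans ((Set.ncard_union_le _ _).trans ?_)
  refine Nat.add_le_add (Set.ncard_image_le (Set.toFinite _)) ?_
  split_ifs <;> simp

end Degrees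

/-- Every connector state of the joining has at most two incoming
and at most two outgoing transitions; consequently, if `g ≥ 2`, `U` is `g`-grade
and every initial state of `U` has at most `g - 1` incoming and outgoing
transitions, then the joining `A(U)` is `g`-grade. -/
theorem joining_grade {n : ℕ} {S : Fin n → Type} {E : Type}
    [∀ i, Fintype (S i)] [Fintype E] (U : Union (Fin n) S E) :
    (∀ c : Fin (4 * n + 1) ⊕ (Fin n × Fin 3),
      inDeg (joining U) (Sum.inr c) ≤ 2 ∧ outDeg (joining U) (Sum.inr c) ≤ 2) ∧
    (∀ g : ℕ, 2 ≤ g → UGrade U g →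
      (∀ i : Fin n,
        inDeg (U i) (U i).init ≤ g - 1 ∧ outDeg (U i) (U i).init ≤ g - 1) →
      Grade (joining U) g) := by
  have hconn : ∀ c : Fin (4 * n + 1) ⊕ (Fin n × Fin 3),
      inDeg (joining U) (Sum.inr c) ≤ 2 ∧ outDeg (joining U) (Sum.inr c) ≤ 2 := by
    rintro (b | ⟨i, k⟩)
    · exact ⟨inDeg_bot_le U b, outDeg_bot_le U b⟩
    · exact ⟨inDeg_top_le U i k, outDeg_top_le U i k⟩
  refine ⟨hconn, fun g hg hU hinit => ?_⟩
  rintro (⟨i, s⟩ | c)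
  · have hin := inDeg_inl_le U i s
    have hout := outDeg_inl_le U i s
    by_cases hs : s = (U i).init
    · subst hs
      have := hinit i
      simp only [if_true] at hin hout
      omega
    · have := hU i s
      simp only [if_neg hs] at hin hout
      omega
  · exact ⟨(hconn c).1.trans hg, (hconn c).2.trans hg⟩

end PetriNets
end

section
/- Let σ ∈ {σ1, σ2}, τ ∈ σ, and let (sup, sig) be a τ-region of the union U^σ_φ that inhibits the event k at the state h_{0,2} (i.e., sig(k) is undefined at sup(h_{0,2})). Then either sig(k) = free and sup(h_{0,2}) = 1, or sig(k) = used and sup(h_{0,2}) = 0; moreover sig(m) = swap, and sig(v_j) = swap for every j ∈ {0,...,4m−1} (i.e., V ⊆ sig^{-1}(swap)). -/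
/-!
Every edge of the gadgets `H_j` carries its event in both directions, and such an edge restricts
the signature strongly, whatever the type of nets:

* an interaction that changes the support along a bidirectional edge is `swap`
  (`eq_swap_of_bidirectional`);
* an interaction that is undefined somewhere and labels a bidirectional edge is `free` or `used`,
  so it keeps the support of both ends at the one value where it is defined
  (`free_or_used_of_inhibiting`).

The event `k` labels the edges `h_{j,0} <-> h_{j,1}` and `h_{j,3} <-> h_{j,4}`. If `k` is inhibited
at `h_{0,2}`, then `h_{j,1}` and `h_{j,3}` all have the support opposite to that of `h_{0,2}`.
In `H_0` the event `m` thus changes the support between `h_{0,1}` and `h_{0,2}`, so it is a swap.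
Consequently every `h_{j,2}` has the support of `h_{0,2}`, and `v_j` changes the support between
`h_{j,2}` and `h_{j,3}`, so it is a swap as well.
-/

namespace PetriNets

/-- The type of nets `{nop, set, swap, free}`, i.e. the single member of `σ1`. -/
def tau1 : Set Interaction :=
  {Interaction.nop, Interaction.set, Interaction.swap, Interaction.free}

/-- Membership in `σ2 = { {nop, set, swap, used} ∪ ω : ω ⊆ {res, free} }`. -/
def sigma2mem (τ : Set Interaction) : Prop :=
  ∃ ω : Set Interaction, ω ⊆ {Interaction.res, Interaction.free} ∧
    τ = ({Interaction.nop, Interaction.set, Interaction.swap, Interaction.used} :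
      Set Interaction) ∪ ω

/-- Direction of an edge of a chain-shaped transition system. -/
inductive Dir : Type
  | fwd | bwd | both
  deriving DecidableEq

def Dir.allowsFwd : Dir → Bool
  | .fwd => true
  | .both => true
  | .bwd => false

def Dir.allowsBwd : Dir → Bool
  | .bwd => true
  | .both => true
  | .fwd => false

def echk {E : Type} [DecidableEq E] (o : Option (E × Dir)) (e : E) (fwd : Bool) : Bool :=
  match o with
  | none => false
  | some (e', d) => decide (e' = e) && (if fwd then d.allowsFwd else d.allowsBwd)

/-- Transition function of a chain with edge specification `spec`:
`spec[t] = (e, d)` means an edge between states `t` and `t + 1` labelled `e`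
with direction `d` (forward, backward or both). -/
def chainDelta {E : Type} [DecidableEq E] (spec : List (E × Dir)) (s : ℕ) (e : E) :
    Option ℕ :=
  if echk spec[s]? e true = true then some (s + 1)
  else if s ≠ 0 ∧ echk spec[s - 1]? e false = true then some (s - 1)
  else none

/-- A chain-shaped transition system with `n + 1` states whose initial state is
the last state of the chain. -/
def chainTS {E : Type} [DecidableEq E] (n : ℕ) (spec : List (E × Dir)) :
    TS (Fin (n + 1)) E where
  init := Fin.last n
  delta := fun s e => (chainDelta spec s.val e).bind fun r =>
    if h : r < n + 1 then some ⟨r, h⟩ else none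

/-- Index set of the gadget transition systems of `U^σ_φ`. -/
inductive GIdx (m : ℕ) : Type
  | H : Fin (4 * m) → GIdx m
  | F0 : GIdx m
  | F1 : GIdx m
  | F2 : GIdx m
  | G : Fin m → GIdx m
  | D : Fin (3 * m) → GIdx m
  | T0 : Fin m → GIdx m
  | T1 : Fin m → GIdx m
  | T2 : Fin m → GIdx m
  | T3 : Fin m → GIdx m
  deriving DecidableEq, Fintype

/-- Events of the gadgets of `U^σ_φ`; `u g` is the unique fresh event of gadget `g`
and `x vv` is the event of the variable `vv` of `φ`. -/
inductive GEvent (V : Type) (m : ℕ) : Type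
  | k : GEvent V m
  | mev : GEvent V m
  | z : GEvent V m
  | q : Fin 4 → GEvent V m
  | v : Fin (4 * m) → GEvent V m
  | w : Fin m → GEvent V m
  | y : Fin m → GEvent V m
  | p : Fin (3 * m) → GEvent V m
  | a : Fin (3 * m) → GEvent V m
  | x : V → GEvent V m
  | u : GIdx m → GEvent V m
  deriving DecidableEq

/-- State spaces of the gadget transition systems. -/
def GS (m : ℕ) : GIdx m → Type
  | .H _ => Fin 6
  | .F0 => Fin 9
  | .F1 => Fin 6
  | .F2 => Fin 10
  | .G _ => Fin 9
  | .D _ => Fin 9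
  | .T0 _ => Fin 18
  | .T1 _ => Fin 5
  | .T2 _ => Fin 5
  | .T3 _ => Fin 5

def fmul4 {m : ℕ} (i : Fin m) (o : Fin 4) : Fin (4 * m) :=
  ⟨4 * i.val + o.val, by have h1 := i.isLt; have h2 := o.isLt; omega⟩

def fmul3 {m : ℕ} (i : Fin m) (o : Fin 3) : Fin (3 * m) :=
  ⟨3 * i.val + o.val, by have h1 := i.isLt; have h2 := o.isLt; omega⟩

/-- The union `U^σ_φ` for a cubic monotone 3-CNF `φ` given by its clauses
`X : Fin m → Fin 3 → V`.  For `b = false` this is `U^{σ1}_φ`, for `b = true`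
it is `U^{σ2}_φ` (in which the events `v_{4i}` and `w_i` of `T_{i,0}` are exchanged). -/
def gadget {V : Type} [DecidableEq V] (m : ℕ) (X : Fin m → Fin 3 → V) (b : Bool) :
    Union (GIdx m) (GS m) (GEvent V m) := fun idx =>
  match idx with
  | .H j => chainTS 5
      [(.k, .both), (.mev, .both), (.v j, .both), (.k, .both), (.u (.H j), .both)]
  | .F0 => chainTS 8
      [(.k, .both), (.mev, .both), (.q 0, .both), (.k, .both), (.mev, .both),
       (.q 1, .both), (.k, .both), (.u .F0, .both)]
  | .F1 => chainTS 5
      [(.k, .both), (.q 2, .both), (.q 3, .both), (.k, .both), (.u .F1, .both)]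
  | .F2 => chainTS 9
      [(.k, .both), (.q 2, .both), (.q 0, .both), (.z, .both), (.q 1, .both),
       (.z, .both), (.q 3, .both), (.k, .both), (.u .F2, .both)]
  | .G j => chainTS 8
      [(.k, .both), (.y j, .both), (.z, .fwd), (.z, .both), (.y j, .both),
       (.w j, .both), (.k, .both), (.u (.G j), .both)]
  | .D l => chainTS 8
      [(.k, .both), (.p l, .both), (.z, .fwd), (.z, .both), (.p l, .both),
       (.a l, .both), (.k, .both), (.u (.D l), .both)]
  | .T0 i => chainTS 17
      [(.k, .both),
       ((if b then .w i else .v (fmul4 i 0)), .both),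
       (.a (fmul3 i 0), .both),
       (.x (X i 0), .both),
       (.x (X i 0), .bwd),
       (.a (fmul3 i 0), .both),
       (.a (fmul3 i 1), .both),
       (.x (X i 1), .both),
       (.x (X i 1), .bwd),
       (.a (fmul3 i 1), .both),
       (.a (fmul3 i 2), .both),
       (.x (X i 2), .both),
       (.x (X i 2), .bwd),
       (.a (fmul3 i 2), .both),
       ((if b then .v (fmul4 i 0) else .w i), .both),
       (.k, .both),
       (.u (.T0 i), .both)]
  | .T1 i => chainTS 4
      [(.x (X i 0), .both), (.v (fmul4 i 1), .both), (.x (X i 1), .both),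
       (.u (.T1 i), .both)]
  | .T2 i => chainTS 4
      [(.x (X i 0), .both), (.v (fmul4 i 2), .both), (.x (X i 2), .both),
       (.u (.T2 i), .both)]
  | .T3 i => chainTS 4
      [(.x (X i 1), .both), (.v (fmul4 i 3), .both), (.x (X i 2), .both),
       (.u (.T3 i), .both)]

/-- `φ` is a cubic monotone 3-CNF: the three variables of every clause are
pairwise distinct, and every variable occurs in exactly three clauses. -/
def Cubic {V : Type} [Fintype V] [DecidableEq V] (m : ℕ) (X : Fin m → Fin 3 → V) : Prop :=
  (∀ i : Fin m, Function.Injective (X i)) ∧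
  ∀ vv : V, (Finset.univ.filter (fun pr : Fin m × Fin 3 => X pr.1 pr.2 = vv)).card = 3

/-- `M` is a one-in-three model of `φ`: it contains exactly one variable of
every clause. -/
def OneInThree {V : Type} (m : ℕ) (X : Fin m → Fin 3 → V) (M : Set V) : Prop :=
  ∀ i : Fin m, ∃! r : Fin 3, X i r ∈ M

def hidx {m : ℕ} (hm : 0 < m) : Fin (4 * m) := ⟨0, by omega⟩

/-- The state `h_{0,2}` of the gadget `H_0`. -/
def h02 {m : ℕ} (hm : 0 < m) : Σ i : GIdx m, GS m i := ⟨GIdx.H (hidx hm), (2 : Fin 6)⟩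

theorem eq_swap_of_bidirectional {i : Interaction} {x y : Bool} (hxy : x ≠ y)
    (h₁ : i.apply x = some y) (h₂ : i.apply y = some x) : i = Interaction.swap := by
  cases i <;> cases x <;> cases y <;> simp_all [Interaction.apply]

/-- The bidirectional edge between `x` and `y` excludes `inp` and `out`. -/
theorem free_or_used_of_inhibiting {i : Interaction} {c x y : Bool} (hc : i.apply c = none)
    (h₁ : i.apply x = some y) (h₂ : i.apply y = some x) :
    (i = Interaction.free ∧ c = true) ∨ (i = Interaction.used ∧ c = false) := by
  cases i <;> cases c <;> cases x <;> cases y <;> simp_all [Interaction.apply]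

theorem ne_of_inhibiting {i : Interaction} {c x y : Bool} (hc : i.apply c = none)
    (hx : i.apply x = some y) : x ≠ c := by
  rintro rfl
  simp [hc] at hx

section HGadget

variable {V : Type} [DecidableEq V] {m : ℕ} {X : Fin m → Fin 3 → V} {τ : Set Interaction}
  {b : Bool}

/-- The support of the state `h_{j,n}`. -/
def hsup (R : URegion τ (gadget m X b)) (j : Fin (4 * m)) (n : Fin 6) : Bool :=
  R.sup ⟨GIdx.H j, n⟩

/-- The bidirectional edges `h_{j,0} <-k-> h_{j,1} <-m-> h_{j,2} <-v_j-> h_{j,3} <-k-> h_{j,4}`,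
as constraints on a region. The backward half of the last edge plays no role and is left out. -/
theorem hsup_edges (R : URegion τ (gadget m X b)) (j : Fin (4 * m)) :
    ((R.sig .k).apply (hsup R j 0) = some (hsup R j 1) ∧
      (R.sig .k).apply (hsup R j 1) = some (hsup R j 0)) ∧
    ((R.sig .mev).apply (hsup R j 1) = some (hsup R j 2) ∧
      (R.sig .mev).apply (hsup R j 2) = some (hsup R j 1)) ∧
    ((R.sig (.v j)).apply (hsup R j 2) = some (hsup R j 3) ∧
      (R.sig (.v j)).apply (hsup R j 3) = some (hsup R j 2)) ∧
    (R.sig .k).apply (hsup R j 3) = some (hsup R j 4) := by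
  refine ⟨⟨?_, ?_⟩, ⟨?_, ?_⟩, ⟨?_, ?_⟩, ?_⟩ <;>
    refine R.consistent (GIdx.H j) _ _ _ ?_ <;>
    simp [gadget, chainTS, chainDelta, echk, Dir.allowsFwd, Dir.allowsBwd] <;> rfl

end HGadget

/-- A `τ`-region of `U^σ_φ` inhibiting `k` at `h_{0,2}` satisfies:
`sig k = free` with `sup h_{0,2} = 1` or `sig k = used` with `sup h_{0,2} = 0`;
moreover `sig m = swap`, and `sig v_j = swap` for all `j`. -/
theorem inhibiting_region_k_m_v {V : Type} [Fintype V] [DecidableEq V]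
    (m : ℕ) (hm : 0 < m) (X : Fin m → Fin 3 → V) (hφ : Cubic m X)
    (τ : Set Interaction) (b : Bool)
    (hσ : (τ = tau1 ∧ b = false) ∨ (sigma2mem τ ∧ b = true))
    (R : URegion τ (gadget m X b))
    (hinh : (R.sig GEvent.k).apply (R.sup (h02 hm)) = none) :
    ((R.sig GEvent.k = Interaction.free ∧ R.sup (h02 hm) = true) ∨
     (R.sig GEvent.k = Interaction.used ∧ R.sup (h02 hm) = false)) ∧
    R.sig GEvent.mev = Interaction.swap ∧
    (∀ j : Fin (4 * m), R.sig (GEvent.v j) = Interaction.swap) := by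
  have hinh' : (R.sig .k).apply (hsup R (hidx hm) 2) = none := hinh
  obtain ⟨⟨hk₁, hk₂⟩, ⟨hm₁, hm₂⟩, -, -⟩ := hsup_edges R (hidx hm)
  have hmev : R.sig .mev = Interaction.swap :=
    eq_swap_of_bidirectional (ne_of_inhibiting hinh' hk₂) hm₁ hm₂
  refine ⟨free_or_used_of_inhibiting hinh hk₁ hk₂, hmev, fun j => ?_⟩
  obtain ⟨⟨-, hkj⟩, ⟨hmj, -⟩, ⟨hv₁, hv₂⟩, hkj'⟩ := hsup_edges R j
  have h1 := ne_of_inhibiting hinh' hkj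
  have h3 := ne_of_inhibiting hinh' hkj'
  rw [hmev] at hmj
  refine eq_swap_of_bidirectional ?_ hv₁ hv₂
  simp only [Interaction.apply, Option.some.injEq] at hmj
  rw [← hmj]
  -- Both `h_{j,1}` and `h_{j,3}` have the support opposite to that of `h_{0,2}`.
  rw [Bool.eq_not_of_ne h1, Bool.eq_not_of_ne h3]
  simp

end PetriNets
end

section
/- Let σ ∈ {σ1, σ2}, τ ∈ σ, and let (sup, sig) be a τ-region of the union U^σ_φ that inhibits the event k at the state h_{0,2} (i.e., sig(k) is undefined at sup(h_{0,2})). Then sig(q_0) = sig(q_1) = swap, sig(q_2) = swap if and only if sig(q_3) = swap, and sig(z) ∈ {nop, swap}. -/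
/-!
An inhibiting region forces `sig k` to be `used` or `free`, so every state at which `k` occurs has one
and the same support `c`, while `h_{0,2}` has support `!c`. None of the types in `σ1 ∪ σ2` contains
`inp` or `out`, so an event labelling a two-way edge is a `swap` exactly when the support changes
along that edge (`eq_swap_iff_of_edge`). Hence `m` is a `swap` (read off `H_0`), therefore so are
`q_0` and `q_1` (read off `F_0`). In `F_1` the path labelled `q_2 q_3` joins two states of support `c`,
so `q_2` and `q_3` are both swaps or both not. Consequently, in `F_2` the states `f_{2,2}` and `f_{2,6}`
have equal support, and because of the swaps `q_0` and `q_1` the `z`-edges `f_{2,3} f_{2,4}` and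
`f_{2,6} f_{2,5}` have complementary sources and complementary targets; an interaction defined on both supports and injective is `nop` or `swap`.
-/

namespace PetriNets

/-- Along a two-way edge, an interaction other than `inp` and `out` is `swap` exactly when
the support changes. -/
theorem eq_swap_iff_of_edge {i : Interaction} {x y : Bool} (hinp : i ≠ .inp) (hout : i ≠ .out)
    (hxy : i.apply x = some y) (hyx : i.apply y = some x) : i = .swap ↔ y = !x := by
  cases i <;> cases x <;> cases y <;> simp_all [Interaction.apply]

/-- An interaction other than `inp` and `out` that is undefined at `x` can only be
`used` or `free`, so both ends of each of its edges have support `!x`. -/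
theorem edge_of_apply_eq_none {i : Interaction} {x y y' : Bool} (hinp : i ≠ .inp)
    (hout : i ≠ .out) (hx : i.apply x = none) (h : i.apply y = some y') :
    y = !x ∧ y' = !x := by
  cases i <;> cases x <;> cases y <;> cases y' <;> simp_all [Interaction.apply]

/-- Two edges with complementary sources and complementary targets force `nop` or `swap`. -/
theorem eq_nop_or_swap {i : Interaction} {x y : Bool}
    (h : i.apply x = some y) (h' : i.apply (!x) = some (!y)) : i = .nop ∨ i = .swap := by
  cases i <;> cases x <;> cases y <;> simp_all [Interaction.apply]

/-- No type of nets in `σ1 ∪ σ2` contains `inp` or `out`. -/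
theorem ne_inp_out_of_mem {τ : Set Interaction} {b : Bool}
    (hσ : (τ = tau1 ∧ b = false) ∨ (sigma2mem τ ∧ b = true)) {i : Interaction} (hi : i ∈ τ) :
    i ≠ .inp ∧ i ≠ .out := by
  rcases hσ with ⟨rfl, -⟩ | ⟨⟨ω, hω, rfl⟩, -⟩
  · constructor <;> rintro rfl <;> simp [tau1] at hi
  · constructor <;> rintro rfl <;>
      · have hmem := hi.resolve_left (by simp)
        simpa using hω hmem

/-- A `τ`-region of `U^σ_φ` inhibiting `k` at `h_{0,2}` satisfies
`sig q_0 = sig q_1 = swap`, `sig q_2 = swap ↔ sig q_3 = swap`, and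
`sig z ∈ {nop, swap}`. -/
theorem inhibiting_region_q_z {V : Type} [Fintype V] [DecidableEq V]
    (m : ℕ) (hm : 0 < m) (X : Fin m → Fin 3 → V) (hφ : Cubic m X)
    (τ : Set Interaction) (b : Bool)
    (hσ : (τ = tau1 ∧ b = false) ∨ (sigma2mem τ ∧ b = true))
    (R : URegion τ (gadget m X b))
    (hinh : (R.sig GEvent.k).apply (R.sup (h02 hm)) = none) :
    R.sig (GEvent.q 0) = Interaction.swap ∧
    R.sig (GEvent.q 1) = Interaction.swap ∧
    (R.sig (GEvent.q 2) = Interaction.swap ↔ R.sig (GEvent.q 3) = Interaction.swap) ∧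
    (R.sig GEvent.z = Interaction.nop ∨ R.sig GEvent.z = Interaction.swap) := by
  have hne : ∀ e, R.sig e ≠ .inp ∧ R.sig e ≠ .out := fun e => ne_inp_out_of_mem hσ (R.sig_mem e)
  have swap_iff : ∀ e {x y : Bool}, (R.sig e).apply x = some y → (R.sig e).apply y = some x →
      (R.sig e = .swap ↔ y = !x) :=
    fun e {_ _} h h' => eq_swap_iff_of_edge (hne e).1 (hne e).2 h h'
  have k_edge : ∀ {y y' : Bool}, (R.sig .k).apply y = some y' →
      y = !(R.sup (h02 hm)) ∧ y' = !(R.sup (h02 hm)) :=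
    fun h => edge_of_apply_eq_none (hne .k).1 (hne .k).2 hinh h
  have H := R.consistent (.H (hidx hm))
  have F0 := R.consistent .F0
  have F1 := R.consistent .F1
  have F2 := R.consistent .F2
  have hm_swap : R.sig .mev = .swap := by
    have h1 := (k_edge (H (0 : Fin 6) .k (1 : Fin 6) rfl)).2
    refine (swap_iff _ (H (1 : Fin 6) .mev (2 : Fin 6) rfl)
      (H (2 : Fin 6) .mev (1 : Fin 6) rfl)).2 ?_
    rw [h1, Bool.not_not]
    rfl
  have hq0 : R.sig (.q 0) = .swap := by
    have h1 := (k_edge (F0 (0 : Fin 9) .k (1 : Fin 9) rfl)).2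
    have h3 := (k_edge (F0 (3 : Fin 9) .k (4 : Fin 9) rfl)).1
    have h2 := (swap_iff _ (F0 (1 : Fin 9) .mev (2 : Fin 9) rfl)
      (F0 (2 : Fin 9) .mev (1 : Fin 9) rfl)).1 hm_swap
    refine (swap_iff _ (F0 (2 : Fin 9) (.q 0) (3 : Fin 9) rfl)
      (F0 (3 : Fin 9) (.q 0) (2 : Fin 9) rfl)).2 ?_
    rw [h2, h3, h1, Bool.not_not]
  have hq1 : R.sig (.q 1) = .swap := by
    have h4 := (k_edge (F0 (3 : Fin 9) .k (4 : Fin 9) rfl)).2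
    have h6 := (k_edge (F0 (6 : Fin 9) .k (7 : Fin 9) rfl)).1
    have h5 := (swap_iff _ (F0 (4 : Fin 9) .mev (5 : Fin 9) rfl)
      (F0 (5 : Fin 9) .mev (4 : Fin 9) rfl)).1 hm_swap
    refine (swap_iff _ (F0 (5 : Fin 9) (.q 1) (6 : Fin 9) rfl)
      (F0 (6 : Fin 9) (.q 1) (5 : Fin 9) rfl)).2 ?_
    rw [h5, h6, h4, Bool.not_not]
  have hq23 : R.sig (.q 2) = .swap ↔ R.sig (.q 3) = .swap := by
    have h1 := (k_edge (F1 (0 : Fin 6) .k (1 : Fin 6) rfl)).2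
    have h3 := (k_edge (F1 (3 : Fin 6) .k (4 : Fin 6) rfl)).1
    rw [swap_iff _ (F1 (1 : Fin 6) (.q 2) (2 : Fin 6) rfl)
        (F1 (2 : Fin 6) (.q 2) (1 : Fin 6) rfl),
      swap_iff _ (F1 (3 : Fin 6) (.q 3) (2 : Fin 6) rfl)
        (F1 (2 : Fin 6) (.q 3) (3 : Fin 6) rfl), h1, h3]
  refine ⟨hq0, hq1, hq23, ?_⟩
  have h1 := (k_edge (F2 (0 : Fin 10) .k (1 : Fin 10) rfl)).2
  have h7 := (k_edge (F2 (7 : Fin 10) .k (8 : Fin 10) rfl)).1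
  have h26 : R.sup ⟨.F2, (6 : Fin 10)⟩ = R.sup ⟨.F2, (2 : Fin 10)⟩ := by
    rw [swap_iff _ (F2 (1 : Fin 10) (.q 2) (2 : Fin 10) rfl)
        (F2 (2 : Fin 10) (.q 2) (1 : Fin 10) rfl),
      swap_iff _ (F2 (7 : Fin 10) (.q 3) (6 : Fin 10) rfl)
        (F2 (6 : Fin 10) (.q 3) (7 : Fin 10) rfl), h1, h7] at hq23
    -- Both supports are Boolean, and they agree with `!!(sup h_{0,2})` simultaneously.
    generalize R.sup ⟨.F2, (6 : Fin 10)⟩ = s6 at hq23 ⊢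
    generalize R.sup ⟨.F2, (2 : Fin 10)⟩ = s2 at hq23 ⊢
    generalize R.sup (h02 hm) = s at hq23
    revert s s2 s6
    decide
  have h3 := (swap_iff _ (F2 (2 : Fin 10) (.q 0) (3 : Fin 10) rfl)
    (F2 (3 : Fin 10) (.q 0) (2 : Fin 10) rfl)).1 hq0
  have h5 := (swap_iff _ (F2 (4 : Fin 10) (.q 1) (5 : Fin 10) rfl)
    (F2 (5 : Fin 10) (.q 1) (4 : Fin 10) rfl)).1 hq1
  have hz := F2 (3 : Fin 10) .z (4 : Fin 10) rfl
  have hz' := F2 (6 : Fin 10) .z (5 : Fin 10) rfl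
  rw [h5, h26, ← Bool.not_not (R.sup ⟨.F2, (2 : Fin 10)⟩), ← h3] at hz'
  exact eq_nop_or_swap hz hz'

end PetriNets
end

section
/- Let σ ∈ {σ1, σ2}, τ ∈ σ, and let (sup, sig) be a τ-region of the union U^σ_φ that inhibits the event k at the state h_{0,2} (i.e., sig(k) is undefined at sup(h_{0,2})). Then sig(w_j) ≠ swap for every j ∈ {0,...,m−1} and sig(a_ℓ) ≠ swap for every ℓ ∈ {0,...,3m−1} (i.e., W ∩ sig^{-1}(swap) = ∅ and Acc ∩ sig^{-1}(swap) = ∅). -/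
/-!
Neither `inp` nor `out` belongs to any of the types considered, so along a bidirectional edge `s <-e-> s'`
the supports satisfy `sup s' = sup s + [sig e = swap]` modulo two (`bidir`).  Write `[e]` for the
parity `[sig e = swap]` and compute modulo two along each gadget.

Inhibition of `k` forces `sig k ∈ {used, free}`, so every state incident with `k` has the same
support `c`, while `h_{0,2}` has support `c + 1` (`k_cases`).  Hence `[m] = 1` by `H_0`, then
`[q_1] = 1` by `F_0`.  In `F_2` the event `q_1` separates the two occurrences of `z`, so `z`
is defined and reversible at both support values and therefore acts as `nop` or `swap`, i.e. as
`x ↦ x + [z]` (`z_total`).  In `G_j` the path from `g_{j,1}` to `g_{j,6}`, both of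
support `c`, then yields `[y_j] + [z] + [z] + [y_j] + [w_j] = 0` (`loop_ne_swap`), so `sig w_j ≠ swap`;
`D_ℓ` is the same chain with `p_ℓ`, `a_ℓ` in place of `y_j`, `w_j`.
-/

namespace PetriNets

/-- The parity of an interaction: `true` exactly for `swap`. -/
def Interaction.parity (i : Interaction) : Bool := decide (i = .swap)

/-- Without `inp` and `out`, an interaction used along an edge in both directions acts by its
parity. -/
theorem bidir {i : Interaction} {x y : Bool} (hi : i ≠ .inp ∧ i ≠ .out)
    (h1 : i.apply x = some y) (h2 : i.apply y = some x) : y = xor x i.parity := by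
  revert hi h1 h2
  cases i <;> cases x <;> cases y <;> simp [Interaction.apply, Interaction.parity]

/-- An interaction undefined at `x` and different from `inp` and `out` is `used` or `free`, hence
defined only at the opposite value. Applied to `k`, this fixes the support of every state at which
`k` occurs. -/
theorem k_cases {i : Interaction} {x : Bool} (hi : i ≠ .inp ∧ i ≠ .out) (h : i.apply x = none) :
    ∀ y z, i.apply y = some z → y = !x := by
  revert hi h
  cases i <;> cases x <;> simp [Interaction.apply]

/-- An interaction labelling bidirectional edges `s <-> s'` and `t <-> t'` whose endpoints
`s'` and `t` have different supports acts by its parity everywhere, also along one-way edges. -/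
theorem z_total {i : Interaction} {s s' t t' : Bool} (hi : i ≠ .inp ∧ i ≠ .out)
    (h1 : i.apply s = some s') (h2 : i.apply s' = some s)
    (h3 : i.apply t = some t') (h4 : i.apply t' = some t) (hne : t = !s') :
    ∀ x y, i.apply x = some y → y = xor x i.parity := by
  have hs := bidir hi h2 h1
  have ht := bidir hi h3 h4
  intro x y hxy
  -- One of `s'`, `t` equals `x`, and the edge at that state determines the value at `x`.
  rcases Bool.eq_or_eq_not x s' with rfl | hx
  · rw [h2] at hxy
    rw [← Option.some.inj hxy]
    exact hs
  · obtain rfl : x = t := by rw [hx, hne]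
    rw [h3] at hxy
    rw [← Option.some.inj hxy]
    exact ht

/-- The parity count along the chains `G_j` and `D_ℓ`: the letters `y` and `z` occur twice each, so
they cancel, and the remaining letter `w` has parity zero because both ends of the path have
the same support. -/
theorem loop_ne_swap {iy iz iw : Interaction} {g1 g2 g3 g4 g5 g6 : Bool}
    (hy1 : g2 = xor g1 iy.parity)
    (hz1 : g3 = xor g2 iz.parity) (hz2 : g4 = xor g3 iz.parity)
    (hy2 : g5 = xor g4 iy.parity) (hw : g6 = xor g5 iw.parity) (h : g1 = g6) :
    iw ≠ .swap := by
  have hp : iw.parity = false := by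
    subst hy1 hz1 hz2 hy2 hw
    revert h
    generalize iy.parity = a, iz.parity = b, iw.parity = c
    revert g1 a b c
    decide
  rintro rfl
  simp [Interaction.parity] at hp

/-- None of the considered types of nets contains `inp` or `out`. -/
theorem not_inp_out {τ : Set Interaction} (hτ : τ = tau1 ∨ sigma2mem τ) {i : Interaction}
    (hi : i ∈ τ) : i ≠ .inp ∧ i ≠ .out := by
  rcases hτ with rfl | ⟨ω, hω, rfl⟩
  · constructor <;> rintro rfl <;> simp [tau1] at hi
  · constructor <;> rintro rfl <;> simp at hi <;> simpa using hω hi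

/-- In a chain, `spec[t] = (e, d)` with `d` allowing the forward direction gives the transition
`t -e-> t + 1`. -/
theorem chain_fwd {E : Type} [DecidableEq E] {n : ℕ} {spec : List (E × Dir)} (t : ℕ)
    (ht : t + 1 < n + 1) {e : E} {d : Dir} (h : spec[t]? = some (e, d))
    (hd : d.allowsFwd = true) :
    (chainTS n spec).delta ⟨t, by omega⟩ e = some ⟨t + 1, ht⟩ := by
  have : t < n := by omega
  simp [chainTS, chainDelta, echk, h, hd, this]

/-- In a chain, `spec[t] = (e, d)` with `d` allowing the backward direction gives the transition
`t + 1 -e-> t`, unless a forward `e`-edge leaves `t + 1`, which takes precedence. -/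
theorem chain_bwd {E : Type} [DecidableEq E] {n : ℕ} {spec : List (E × Dir)} (t : ℕ)
    (ht : t + 1 < n + 1) {e : E} {d : Dir} (h : spec[t]? = some (e, d))
    (hd : d.allowsBwd = true) (hn : echk spec[t + 1]? e true = false) :
    (chainTS n spec).delta ⟨t + 1, ht⟩ e = some ⟨t, by omega⟩ := by
  have : t ≤ n := by omega
  simp [chainTS, chainDelta, echk, h, hd] at hn ⊢
  simp [hn, this]

/-- A `τ`-region of `U^σ_φ` inhibiting `k` at `h_{0,2}` satisfies
`sig w_j ≠ swap` for all `j` and `sig a_ℓ ≠ swap` for all `ℓ`. -/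
theorem inhibiting_region_w_a {V : Type} [Fintype V] [DecidableEq V]
    (m : ℕ) (hm : 0 < m) (X : Fin m → Fin 3 → V) (hφ : Cubic m X)
    (τ : Set Interaction) (b : Bool)
    (hσ : (τ = tau1 ∧ b = false) ∨ (sigma2mem τ ∧ b = true))
    (R : URegion τ (gadget m X b))
    (hinh : (R.sig GEvent.k).apply (R.sup (h02 hm)) = none) :
    (∀ j : Fin m, R.sig (GEvent.w j) ≠ Interaction.swap) ∧
    (∀ l : Fin (3 * m), R.sig (GEvent.a l) ≠ Interaction.swap) := by
  have hio : ∀ e, R.sig e ≠ .inp ∧ R.sig e ≠ .out := fun e =>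
    not_inp_out (hσ.imp And.left And.left) (R.sig_mem e)
  have hk := k_cases (hio .k) hinh
  generalize hc : R.sup (h02 hm) = c at hk
  have h1 := hk _ _ (R.consistent (.H (hidx hm)) (1 : Fin 6) .k (0 : Fin 6)
    (chain_bwd 0 (by decide) rfl rfl rfl))
  have hm1 := bidir (hio .mev)
    (R.consistent (.H (hidx hm)) (1 : Fin 6) .mev (2 : Fin 6) (chain_fwd 1 (by decide) rfl rfl))
    (R.consistent (.H (hidx hm)) (2 : Fin 6) .mev (1 : Fin 6)
      (chain_bwd 1 (by decide) rfl rfl rfl))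
  have hmev : (R.sig .mev).parity = true := by
    change R.sup (h02 hm) = _ at hm1
    rw [h1, hc] at hm1
    revert hm1
    cases c <;> cases (R.sig .mev).parity <;> decide
  -- In `F_0`, `q_1` occurs between `f_{0,5}` and `f_{0,6}`.
  have f4 := hk _ _ (R.consistent .F0 (4 : Fin 9) .k (3 : Fin 9)
    (chain_bwd 3 (by decide) rfl rfl rfl))
  have f6 := hk _ _ (R.consistent .F0 (6 : Fin 9) .k (7 : Fin 9)
    (chain_fwd 6 (by decide) rfl rfl))
  have hm2 := bidir (hio .mev)
    (R.consistent .F0 (4 : Fin 9) .mev (5 : Fin 9) (chain_fwd 4 (by decide) rfl rfl))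
    (R.consistent .F0 (5 : Fin 9) .mev (4 : Fin 9) (chain_bwd 4 (by decide) rfl rfl rfl))
  have hq1 := bidir (hio (.q 1))
    (R.consistent .F0 (5 : Fin 9) (.q 1) (6 : Fin 9) (chain_fwd 5 (by decide) rfl rfl))
    (R.consistent .F0 (6 : Fin 9) (.q 1) (5 : Fin 9) (chain_bwd 5 (by decide) rfl rfl rfl))
  have hq : (R.sig (.q 1)).parity = true := by
    rw [f6, hm2, f4, hmev] at hq1
    revert hq1
    cases c <;> cases (R.sig (.q 1)).parity <;> decide
  have hf45 := bidir (hio (.q 1))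
    (R.consistent .F2 (4 : Fin 10) (.q 1) (5 : Fin 10) (chain_fwd 4 (by decide) rfl rfl))
    (R.consistent .F2 (5 : Fin 10) (.q 1) (4 : Fin 10) (chain_bwd 4 (by decide) rfl rfl rfl))
  rw [hq, Bool.xor_true] at hf45
  have hz := z_total (hio .z)
    (R.consistent .F2 (3 : Fin 10) .z (4 : Fin 10) (chain_fwd 3 (by decide) rfl rfl))
    (R.consistent .F2 (4 : Fin 10) .z (3 : Fin 10) (chain_bwd 3 (by decide) rfl rfl rfl))
    (R.consistent .F2 (5 : Fin 10) .z (6 : Fin 10) (chain_fwd 5 (by decide) rfl rfl))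
    (R.consistent .F2 (6 : Fin 10) .z (5 : Fin 10) (chain_bwd 5 (by decide) rfl rfl rfl))
    hf45
  constructor
  · intro j
    have g1 := hk _ _ (R.consistent (.G j) (1 : Fin 9) .k (0 : Fin 9)
      (chain_bwd 0 (by decide) rfl rfl rfl))
    have g6 := hk _ _ (R.consistent (.G j) (6 : Fin 9) .k (7 : Fin 9)
      (chain_fwd 6 (by decide) rfl rfl))
    exact loop_ne_swap
      (bidir (hio (.y j))
        (R.consistent (.G j) (1 : Fin 9) (.y j) (2 : Fin 9) (chain_fwd 1 (by decide) rfl rfl))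
        (R.consistent (.G j) (2 : Fin 9) (.y j) (1 : Fin 9)
          (chain_bwd 1 (by decide) rfl rfl rfl)))
      (hz _ _
        (R.consistent (.G j) (2 : Fin 9) .z (3 : Fin 9) (chain_fwd 2 (by decide) rfl rfl)))
      (hz _ _
        (R.consistent (.G j) (3 : Fin 9) .z (4 : Fin 9) (chain_fwd 3 (by decide) rfl rfl)))
      (bidir (hio (.y j))
        (R.consistent (.G j) (4 : Fin 9) (.y j) (5 : Fin 9) (chain_fwd 4 (by decide) rfl rfl))
        (R.consistent (.G j) (5 : Fin 9) (.y j) (4 : Fin 9)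
          (chain_bwd 4 (by decide) rfl rfl rfl)))
      (bidir (hio (.w j))
        (R.consistent (.G j) (5 : Fin 9) (.w j) (6 : Fin 9) (chain_fwd 5 (by decide) rfl rfl))
        (R.consistent (.G j) (6 : Fin 9) (.w j) (5 : Fin 9)
          (chain_bwd 5 (by decide) rfl rfl rfl)))
      (g1.trans g6.symm)
  · intro l
    have d1 := hk _ _ (R.consistent (.D l) (1 : Fin 9) .k (0 : Fin 9)
      (chain_bwd 0 (by decide) rfl rfl rfl))
    have d6 := hk _ _ (R.consistent (.D l) (6 : Fin 9) .k (7 : Fin 9)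
      (chain_fwd 6 (by decide) rfl rfl))
    exact loop_ne_swap
      (bidir (hio (.p l))
        (R.consistent (.D l) (1 : Fin 9) (.p l) (2 : Fin 9) (chain_fwd 1 (by decide) rfl rfl))
        (R.consistent (.D l) (2 : Fin 9) (.p l) (1 : Fin 9)
          (chain_bwd 1 (by decide) rfl rfl rfl)))
      (hz _ _
        (R.consistent (.D l) (2 : Fin 9) .z (3 : Fin 9) (chain_fwd 2 (by decide) rfl rfl)))
      (hz _ _
        (R.consistent (.D l) (3 : Fin 9) .z (4 : Fin 9) (chain_fwd 3 (by decide) rfl rfl)))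
      (bidir (hio (.p l))
        (R.consistent (.D l) (4 : Fin 9) (.p l) (5 : Fin 9) (chain_fwd 4 (by decide) rfl rfl))
        (R.consistent (.D l) (5 : Fin 9) (.p l) (4 : Fin 9)
          (chain_bwd 4 (by decide) rfl rfl rfl)))
      (bidir (hio (.a l))
        (R.consistent (.D l) (5 : Fin 9) (.a l) (6 : Fin 9) (chain_fwd 5 (by decide) rfl rfl))
        (R.consistent (.D l) (6 : Fin 9) (.a l) (5 : Fin 9)
          (chain_bwd 5 (by decide) rfl rfl rfl)))
      (d1.trans d6.symm)

end PetriNets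
end

section
/- Let τ ∈ σ2 and let (sup, sig) be a τ-region of the union U^{σ2}_φ that inhibits the event k at the state h_{0,2}, with sig(k) = used. Then {X ∈ V(φ) : sig(X) = set} is a one-in-three model of φ. -/
/-! The argument propagates the support along each chain. Across a two-way edge the support either
changes, and then the event is a `swap`, or it stays constant (`two_way_ne`, `two_way_eq`).

Since `sig k = used`, every state at a `k`-edge has support `1`. As `k` is inhibited at `h_{0,2}`,
that state has support `0`, so `m` is a `swap`, and then the chains `H_j` and `F_0` force all `v_j`,
`q_0` and `q_1` to be `swap`. In `F_1` the events `q_2` and `q_3` are both `swap` or both constant,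
and with this `F_2` forces `z` to be `nop` or `swap`. Hence in `G_j` and `D_l` the support is the
same before and after the two `z`-steps, the effects of `y_j` resp. `p_l` cancel, and `w_j` and
`a_l` join two states of support `1`; in particular they are not `swap`.

In `T'_{i,0}` the support is therefore `1` just before the first variable block and `0` just after
the last one, while a block whose variable is not `set` propagates support `1`
(`block_true_or_set`). So some variable of the clause is `set`. Two variables of the clause cannot
both be `set`, because `T_{i,1}`, `T_{i,2}`, `T_{i,3}` separate each pair by a `swap`. -/

namespace PetriNets

/-! ### Interactions on two-way edges -/

/-- The interaction `i` labels a two-way edge between states of support `x` and `y`. -/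
def TwoWay (i : Interaction) (x y : Bool) : Prop :=
  i.apply x = some y ∧ i.apply y = some x

lemma two_way_ne {i : Interaction} {x y : Bool} (h : TwoWay i x y) (hne : x ≠ y) :
    i = .swap := by
  cases i <;> cases x <;> cases y <;> simp_all [TwoWay, Interaction.apply]

lemma two_way_eq {i : Interaction} {x y : Bool} (h : TwoWay i x y) (hi : i ≠ .swap) :
    x = y := by
  by_contra hne
  exact hi (two_way_ne h hne)

lemma two_way_swap {i : Interaction} {x y : Bool} (h : TwoWay i x y) (hi : i = .swap) :
    y = !x := by
  subst hi
  simpa [TwoWay, Interaction.apply, eq_comm] using h.1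

lemma two_way_used {i : Interaction} {x y : Bool} (h : TwoWay i x y) (hi : i = .used) :
    x = true ∧ y = true := by
  subst hi
  cases x <;> cases y <;> simp_all [TwoWay, Interaction.apply]

lemma two_way_set {i : Interaction} {x y : Bool} (h : TwoWay i x y) (hi : i = .set) :
    x = true ∧ y = true := by
  subst hi
  cases x <;> cases y <;> simp_all [TwoWay, Interaction.apply]

/-- A variable block `s <-X-> s' <-X- s''` of `T'_{i,0}` entered with support `1` is left with
support `1`, unless its variable is a `set`. -/
lemma block_true_or_set {i : Interaction} {s s' s'' : Bool} (h : TwoWay i s s')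
    (h' : i.apply s'' = some s') (hs : s = true) (hi : i ≠ .set) : s'' = true := by
  cases i <;> cases s <;> cases s' <;> cases s'' <;> simp_all [TwoWay, Interaction.apply]

/-- The chain `F_2` between its two `k`-edges, with `q_0` and `q_1` already known to be `swap` and
`q_2`, `q_3` known to change the support either both or not at all. -/
lemma z_nop_or_swap {z : Interaction} {f2 f3 f4 f5 f6 : Bool} (h3 : f3 = !f2)
    (hz : TwoWay z f3 f4) (h5 : f5 = !f4) (hz' : TwoWay z f5 f6) (h6 : f6 = f2) :
    z = .nop ∨ z = .swap := by
  cases z <;> cases f2 <;> cases f4 <;> simp_all [TwoWay, Interaction.apply]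

/-- Two consecutive `z`-steps between two edges labelled with the same event `y` restore the
support. -/
lemma cancel_around_z {y z : Interaction} {g1 g2 g3 g4 g5 : Bool} (hz : z = .nop ∨ z = .swap)
    (h12 : TwoWay y g1 g2) (h23 : z.apply g2 = some g3) (h34 : TwoWay z g3 g4)
    (h45 : TwoWay y g4 g5) : g1 = g5 := by
  rcases hz with rfl | rfl <;> cases y <;> cases g1 <;> cases g2 <;> cases g3 <;> cases g4 <;>
    cases g5 <;> simp_all [TwoWay, Interaction.apply]

/-! ### Transitions of the chains -/

section Chains

variable {V : Type} [DecidableEq V] {m : ℕ} {X : Fin m → Fin 3 → V} {τ : Set Interaction}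
  (R : URegion τ (gadget m X true))

/-- The constraints a region satisfies on the edges of `H_j`, other than the fresh one; `s` lists
the supports of the states. The lemmas on the other chains have the same form. -/
lemma edges_H (j : Fin (4 * m)) : ∃ s : Fin 6 → Bool, (∀ t, s t = R.sup ⟨.H j, t⟩) ∧
    TwoWay (R.sig .k) (s 0) (s 1) ∧ TwoWay (R.sig .mev) (s 1) (s 2) ∧
    TwoWay (R.sig (.v j)) (s 2) (s 3) ∧ TwoWay (R.sig .k) (s 3) (s 4) := by
  refine ⟨fun t => R.sup ⟨.H j, t⟩, fun _ => rfl, ?_⟩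
  refine ⟨⟨?_, ?_⟩, ⟨?_, ?_⟩, ⟨?_, ?_⟩, ⟨?_, ?_⟩⟩ <;> apply R.consistent <;>
    simp [gadget, chainTS, chainDelta, echk, Dir.allowsFwd, Dir.allowsBwd] <;> rfl

lemma edges_F0 : ∃ s : Fin 9 → Bool,
    TwoWay (R.sig .k) (s 0) (s 1) ∧ TwoWay (R.sig .mev) (s 1) (s 2) ∧
    TwoWay (R.sig (.q 0)) (s 2) (s 3) ∧ TwoWay (R.sig .k) (s 3) (s 4) ∧
    TwoWay (R.sig .mev) (s 4) (s 5) ∧ TwoWay (R.sig (.q 1)) (s 5) (s 6) ∧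
    TwoWay (R.sig .k) (s 6) (s 7) := by
  refine ⟨fun t => R.sup ⟨.F0, t⟩, ?_⟩
  refine ⟨⟨?_, ?_⟩, ⟨?_, ?_⟩, ⟨?_, ?_⟩, ⟨?_, ?_⟩, ⟨?_, ?_⟩, ⟨?_, ?_⟩, ⟨?_, ?_⟩⟩ <;>
    apply R.consistent <;>
    simp [gadget, chainTS, chainDelta, echk, Dir.allowsFwd, Dir.allowsBwd] <;> rfl

lemma edges_F1 : ∃ s : Fin 6 → Bool,
    TwoWay (R.sig .k) (s 0) (s 1) ∧ TwoWay (R.sig (.q 2)) (s 1) (s 2) ∧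
    TwoWay (R.sig (.q 3)) (s 2) (s 3) ∧ TwoWay (R.sig .k) (s 3) (s 4) := by
  refine ⟨fun t => R.sup ⟨.F1, t⟩, ?_⟩
  refine ⟨⟨?_, ?_⟩, ⟨?_, ?_⟩, ⟨?_, ?_⟩, ⟨?_, ?_⟩⟩ <;> apply R.consistent <;>
    simp [gadget, chainTS, chainDelta, echk, Dir.allowsFwd, Dir.allowsBwd] <;> rfl

lemma edges_F2 : ∃ s : Fin 10 → Bool,
    TwoWay (R.sig .k) (s 0) (s 1) ∧ TwoWay (R.sig (.q 2)) (s 1) (s 2) ∧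
    TwoWay (R.sig (.q 0)) (s 2) (s 3) ∧ TwoWay (R.sig .z) (s 3) (s 4) ∧
    TwoWay (R.sig (.q 1)) (s 4) (s 5) ∧ TwoWay (R.sig .z) (s 5) (s 6) ∧
    TwoWay (R.sig (.q 3)) (s 6) (s 7) ∧ TwoWay (R.sig .k) (s 7) (s 8) := by
  refine ⟨fun t => R.sup ⟨.F2, t⟩, ?_⟩
  refine ⟨⟨?_, ?_⟩, ⟨?_, ?_⟩, ⟨?_, ?_⟩, ⟨?_, ?_⟩, ⟨?_, ?_⟩, ⟨?_, ?_⟩, ⟨?_, ?_⟩, ⟨?_, ?_⟩⟩ <;>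
    apply R.consistent <;>
    simp [gadget, chainTS, chainDelta, echk, Dir.allowsFwd, Dir.allowsBwd] <;> rfl

lemma edges_G (j : Fin m) : ∃ s : Fin 9 → Bool,
    TwoWay (R.sig .k) (s 0) (s 1) ∧ TwoWay (R.sig (.y j)) (s 1) (s 2) ∧
    (R.sig .z).apply (s 2) = some (s 3) ∧ TwoWay (R.sig .z) (s 3) (s 4) ∧
    TwoWay (R.sig (.y j)) (s 4) (s 5) ∧ TwoWay (R.sig (.w j)) (s 5) (s 6) ∧
    TwoWay (R.sig .k) (s 6) (s 7) := by
  refine ⟨fun t => R.sup ⟨.G j, t⟩, ?_⟩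
  refine ⟨⟨?_, ?_⟩, ⟨?_, ?_⟩, ?_, ⟨?_, ?_⟩, ⟨?_, ?_⟩, ⟨?_, ?_⟩, ⟨?_, ?_⟩⟩ <;>
    apply R.consistent <;>
    simp [gadget, chainTS, chainDelta, echk, Dir.allowsFwd, Dir.allowsBwd] <;> rfl

lemma edges_D (l : Fin (3 * m)) : ∃ s : Fin 9 → Bool,
    TwoWay (R.sig .k) (s 0) (s 1) ∧ TwoWay (R.sig (.p l)) (s 1) (s 2) ∧
    (R.sig .z).apply (s 2) = some (s 3) ∧ TwoWay (R.sig .z) (s 3) (s 4) ∧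
    TwoWay (R.sig (.p l)) (s 4) (s 5) ∧ TwoWay (R.sig (.a l)) (s 5) (s 6) ∧
    TwoWay (R.sig .k) (s 6) (s 7) := by
  refine ⟨fun t => R.sup ⟨.D l, t⟩, ?_⟩
  refine ⟨⟨?_, ?_⟩, ⟨?_, ?_⟩, ?_, ⟨?_, ?_⟩, ⟨?_, ?_⟩, ⟨?_, ?_⟩, ⟨?_, ?_⟩⟩ <;>
    apply R.consistent <;>
    simp [gadget, chainTS, chainDelta, echk, Dir.allowsFwd, Dir.allowsBwd] <;> rfl

lemma edges_T0 (i : Fin m) : ∃ s : Fin 18 → Bool,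
    TwoWay (R.sig .k) (s 0) (s 1) ∧ TwoWay (R.sig (.w i)) (s 1) (s 2) ∧
    TwoWay (R.sig (.a (fmul3 i 0))) (s 2) (s 3) ∧
    TwoWay (R.sig (.x (X i 0))) (s 3) (s 4) ∧
    (R.sig (.x (X i 0))).apply (s 5) = some (s 4) ∧
    TwoWay (R.sig (.a (fmul3 i 0))) (s 5) (s 6) ∧
    TwoWay (R.sig (.a (fmul3 i 1))) (s 6) (s 7) ∧
    TwoWay (R.sig (.x (X i 1))) (s 7) (s 8) ∧
    (R.sig (.x (X i 1))).apply (s 9) = some (s 8) ∧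
    TwoWay (R.sig (.a (fmul3 i 1))) (s 9) (s 10) ∧
    TwoWay (R.sig (.a (fmul3 i 2))) (s 10) (s 11) ∧
    TwoWay (R.sig (.x (X i 2))) (s 11) (s 12) ∧
    (R.sig (.x (X i 2))).apply (s 13) = some (s 12) ∧
    TwoWay (R.sig (.a (fmul3 i 2))) (s 13) (s 14) ∧
    TwoWay (R.sig (.v (fmul4 i 0))) (s 14) (s 15) ∧
    TwoWay (R.sig .k) (s 15) (s 16) := by
  refine ⟨fun t => R.sup ⟨.T0 i, t⟩, ?_⟩
  refine ⟨⟨?_, ?_⟩, ⟨?_, ?_⟩, ⟨?_, ?_⟩, ⟨?_, ?_⟩, ?_, ⟨?_, ?_⟩, ⟨?_, ?_⟩, ⟨?_, ?_⟩, ?_,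
    ⟨?_, ?_⟩, ⟨?_, ?_⟩, ⟨?_, ?_⟩, ?_, ⟨?_, ?_⟩, ⟨?_, ?_⟩, ⟨?_, ?_⟩⟩ <;>
    apply R.consistent <;>
    simp [gadget, chainTS, chainDelta, echk, Dir.allowsFwd, Dir.allowsBwd, fmul3] <;> rfl

lemma edges_T1 (i : Fin m) : ∃ s : Fin 5 → Bool,
    TwoWay (R.sig (.x (X i 0))) (s 0) (s 1) ∧ TwoWay (R.sig (.v (fmul4 i 1))) (s 1) (s 2) ∧
    TwoWay (R.sig (.x (X i 1))) (s 2) (s 3) := by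
  refine ⟨fun t => R.sup ⟨.T1 i, t⟩, ?_⟩
  refine ⟨⟨?_, ?_⟩, ⟨?_, ?_⟩, ⟨?_, ?_⟩⟩ <;> apply R.consistent <;>
    simp [gadget, chainTS, chainDelta, echk, Dir.allowsFwd, Dir.allowsBwd] <;> rfl

lemma edges_T2 (i : Fin m) : ∃ s : Fin 5 → Bool,
    TwoWay (R.sig (.x (X i 0))) (s 0) (s 1) ∧ TwoWay (R.sig (.v (fmul4 i 2))) (s 1) (s 2) ∧
    TwoWay (R.sig (.x (X i 2))) (s 2) (s 3) := by
  refine ⟨fun t => R.sup ⟨.T2 i, t⟩, ?_⟩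
  refine ⟨⟨?_, ?_⟩, ⟨?_, ?_⟩, ⟨?_, ?_⟩⟩ <;> apply R.consistent <;>
    simp [gadget, chainTS, chainDelta, echk, Dir.allowsFwd, Dir.allowsBwd] <;> rfl

lemma edges_T3 (i : Fin m) : ∃ s : Fin 5 → Bool,
    TwoWay (R.sig (.x (X i 1))) (s 0) (s 1) ∧ TwoWay (R.sig (.v (fmul4 i 3))) (s 1) (s 2) ∧
    TwoWay (R.sig (.x (X i 2))) (s 2) (s 3) := by
  refine ⟨fun t => R.sup ⟨.T3 i, t⟩, ?_⟩
  refine ⟨⟨?_, ?_⟩, ⟨?_, ?_⟩, ⟨?_, ?_⟩⟩ <;> apply R.consistent <;>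
    simp [gadget, chainTS, chainDelta, echk, Dir.allowsFwd, Dir.allowsBwd] <;> rfl

/-! ### Signatures of the events -/

variable {R}

lemma mev_swap (hm : 0 < m) (hinh : (R.sig GEvent.k).apply (R.sup (h02 hm)) = none)
    (hk : R.sig GEvent.k = .used) : R.sig .mev = .swap := by
  obtain ⟨s, hs, h01, h12, -, -⟩ := edges_H R (hidx hm)
  have h1 := (two_way_used h01 hk).2
  have h2 : s 2 = false := by
    have : R.sup (h02 hm) = s 2 := (hs 2).symm
    rw [this, hk] at hinh
    simpa [Interaction.apply] using hinh
  exact two_way_ne h12 (by simp [h1, h2])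

lemma v_swap (hk : R.sig GEvent.k = .used) (hmev : R.sig .mev = .swap) (j : Fin (4 * m)) :
    R.sig (.v j) = .swap := by
  obtain ⟨s, -, h01, h12, h23, h34⟩ := edges_H R j
  refine two_way_ne h23 ?_
  simp [two_way_swap h12 hmev, (two_way_used h01 hk).2, (two_way_used h34 hk).1]

lemma q_swap (hk : R.sig GEvent.k = .used) (hmev : R.sig .mev = .swap) :
    R.sig (.q 0) = .swap ∧ R.sig (.q 1) = .swap := by
  obtain ⟨s, h01, h12, h23, h34, h45, h56, h67⟩ := edges_F0 R
  constructor
  · refine two_way_ne h23 ?_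
    simp [two_way_swap h12 hmev, (two_way_used h01 hk).2, (two_way_used h34 hk).1]
  · refine two_way_ne h56 ?_
    simp [two_way_swap h45 hmev, (two_way_used h34 hk).2, (two_way_used h67 hk).1]

lemma q2_swap_iff_q3_swap (hk : R.sig GEvent.k = .used) :
    R.sig (.q 2) = .swap ↔ R.sig (.q 3) = .swap := by
  obtain ⟨s, h01, h12, h23, h34⟩ := edges_F1 R
  have h1 := (two_way_used h01 hk).2
  have h3 := (two_way_used h34 hk).1
  constructor
  · intro h
    exact two_way_ne h23 (by simp [two_way_swap h12 h, h1, h3])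
  · intro h
    have := two_way_swap h23 h
    exact two_way_ne h12 (by simp_all)

lemma sig_z (hk : R.sig GEvent.k = .used) (hmev : R.sig .mev = .swap) :
    R.sig .z = .nop ∨ R.sig .z = .swap := by
  obtain ⟨s, h01, h12, h23, h34, h45, h56, h67, h78⟩ := edges_F2 R
  obtain ⟨hq0, hq1⟩ := q_swap hk hmev
  have h1 := (two_way_used h01 hk).2
  have h7 := (two_way_used h78 hk).1
  refine z_nop_or_swap (two_way_swap h23 hq0) h34 (two_way_swap h45 hq1) h56 ?_
  by_cases h : R.sig (.q 2) = .swap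
  · have h2 := two_way_swap h12 h
    have h7' := two_way_swap h67 ((q2_swap_iff_q3_swap hk).1 h)
    simp_all
  · have h2 := two_way_eq h12 h
    have h7' := two_way_eq h67 (fun h' => h ((q2_swap_iff_q3_swap hk).2 h'))
    simp_all

lemma w_ne_swap (hk : R.sig GEvent.k = .used) (hmev : R.sig .mev = .swap) (j : Fin m) :
    R.sig (.w j) ≠ .swap := by
  obtain ⟨s, h01, h12, h23, h34, h45, h56, h67⟩ := edges_G R j
  intro h
  have h5 := cancel_around_z (sig_z hk hmev) h12 h23 h34 h45
  have h6 := two_way_swap h56 h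
  simp [← h5, (two_way_used h01 hk).2, (two_way_used h67 hk).1] at h6

lemma a_ne_swap (hk : R.sig GEvent.k = .used) (hmev : R.sig .mev = .swap) (l : Fin (3 * m)) :
    R.sig (.a l) ≠ .swap := by
  obtain ⟨s, h01, h12, h23, h34, h45, h56, h67⟩ := edges_D R l
  intro h
  have h5 := cancel_around_z (sig_z hk hmev) h12 h23 h34 h45
  have h6 := two_way_swap h56 h
  simp [← h5, (two_way_used h01 hk).2, (two_way_used h67 hk).1] at h6

lemma exists_set (hk : R.sig GEvent.k = .used) (hmev : R.sig .mev = .swap) (i : Fin m) :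
    ∃ r : Fin 3, R.sig (.x (X i r)) = .set := by
  by_contra! hne
  obtain ⟨s, h01, h12, h23, h34, h54, h56, h67, h78, h98, h910, h1011, h1112, h1312, h1314,
    h1415, h1516⟩ := edges_T0 R i
  have ha := a_ne_swap hk hmev
  have h3 : s 3 = true := by
    rw [← two_way_eq h23 (ha _), ← two_way_eq h12 (w_ne_swap hk hmev i)]
    exact (two_way_used h01 hk).2
  have h7 : s 7 = true := by
    rw [← two_way_eq h67 (ha _), ← two_way_eq h56 (ha _)]
    exact block_true_or_set h34 h54 h3 (hne 0)
  have h11 : s 11 = true := by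
    rw [← two_way_eq h1011 (ha _), ← two_way_eq h910 (ha _)]
    exact block_true_or_set h78 h98 h7 (hne 1)
  have h14 : s 14 = true := by
    rw [← two_way_eq h1314 (ha _)]
    exact block_true_or_set h1112 h1312 h11 (hne 2)
  have h15 := two_way_swap h1415 (v_swap hk hmev _)
  simp [h14, (two_way_used h1516 hk).1] at h15

/-- Two events separated by a `swap`, as in `T_{i,1}`, `T_{i,2}`, `T_{i,3}`, are not both `set`. -/
lemma not_set_both {x v x' : Interaction} {s0 s1 s2 s3 : Bool} (h01 : TwoWay x s0 s1)
    (h12 : TwoWay v s1 s2) (h23 : TwoWay x' s2 s3) (hv : v = .swap) (hx : x = .set)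
    (hx' : x' = .set) : False := by
  have h := two_way_swap h12 hv
  simp [(two_way_set h01 hx).2, (two_way_set h23 hx').1] at h

end Chains

/-- For `τ ∈ σ2`, if a `τ`-region of `U^{σ2}_φ` inhibits `k` at
`h_{0,2}` with `sig k = used`, then `{X ∈ V(φ) : sig X = set}` is a one-in-three
model of `φ`. -/
theorem sigma2_used_set_model {V : Type} [Fintype V] [DecidableEq V]
    (m : ℕ) (hm : 0 < m) (X : Fin m → Fin 3 → V) (hφ : Cubic m X)
    (τ : Set Interaction) (hτ : sigma2mem τ)
    (R : URegion τ (gadget m X true))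
    (hinh : (R.sig GEvent.k).apply (R.sup (h02 hm)) = none)
    (hk : R.sig GEvent.k = Interaction.used) :
    OneInThree m X {vv : V | R.sig (GEvent.x vv) = Interaction.set} := by
  intro i
  have hmev := mev_swap hm hinh hk
  have hv := v_swap hk hmev
  have n01 : R.sig (.x (X i 0)) = .set → R.sig (.x (X i 1)) = .set → False := by
    obtain ⟨s, h1, h2, h3⟩ := edges_T1 R i
    exact not_set_both h1 h2 h3 (hv _)
  have n02 : R.sig (.x (X i 0)) = .set → R.sig (.x (X i 2)) = .set → False := by
    obtain ⟨s, h1, h2, h3⟩ := edges_T2 R i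
    exact not_set_both h1 h2 h3 (hv _)
  have n12 : R.sig (.x (X i 1)) = .set → R.sig (.x (X i 2)) = .set → False := by
    obtain ⟨s, h1, h2, h3⟩ := edges_T3 R i
    exact not_set_both h1 h2 h3 (hv _)
  obtain ⟨r, hr⟩ := exists_set hk hmev i
  refine ⟨r, hr, fun r' hr' => ?_⟩
  change R.sig (.x (X i r')) = .set at hr'
  fin_cases r <;> fin_cases r' <;> first
    | rfl
    | exact (n01 hr hr').elim
    | exact (n01 hr' hr).elim
    | exact (n02 hr hr').elim
    | exact (n02 hr' hr).elim
    | exact (n12 hr hr').elim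
    | exact (n12 hr' hr).elim

end PetriNets
end

section
/- Let τ ∈ σ2 and let (sup, sig) be a τ-region of the union U^{σ2}_φ that inhibits the event k at the state h_{0,2}, with sig(k) = free. Then {X ∈ V(φ) : sig(X) = res} is a one-in-three model of φ. -/
/-!
If `sig k = free`, both ends of every `k`-edge have support `0`. A bidirectional edge changes the
support iff its event has signature `swap`. The path `h_{0,1}, h_{0,2}` therefore gives
`sig m = swap`, and then every `v_j` and `q_1` are `swap` (`sig_mev`, `sig_v`, `sig_q1`).
In `F_2` the two `z`-edges are joined by a `q_1`-edge, which leaves only `nop` and `swap` for `z`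
(`sig_z`). Hence the two consecutive `z`-edges of `G_j` and `D_l` preserve
the support in total, so neither `w_j` nor `a_l` is `swap` (`sig_w_ne`, `sig_a_ne`).

In `T'_{i,0}` the support thus starts at `0`, must be `1` just before `v_{4i}`, and can become `1`
only across a variable event with signature `res` (`exists_res`). Since `v_{4i+1}, v_{4i+2},
v_{4i+3}` are `swap`, the gadgets `T_{i,1}, T_{i,2}, T_{i,3}` forbid two such variables in one
clause (`Bi.not_res_res`).
-/

namespace PetriNets

/-- The interaction `i` is consistent with a bidirectional edge whose ends have supports
`a` and `b`. -/
def Bi (i : Interaction) (a b : Bool) : Prop := i.apply a = some b ∧ i.apply b = some a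

lemma Bi.eq_swap {i : Interaction} {a b : Bool} (h : Bi i a b) (hab : a ≠ b) : i = .swap := by
  revert h hab
  cases i <;> cases a <;> cases b <;> simp [Bi, Interaction.apply]

lemma Bi.eq_of_ne_swap {i : Interaction} {a b : Bool} (h : Bi i a b) (hi : i ≠ .swap) :
    a = b := by
  by_contra hab
  exact hi (h.eq_swap hab)

lemma Bi.of_swap {i : Interaction} {a b : Bool} (h : Bi i a b) (hi : i = .swap) : b = !a := by
  subst hi
  simpa [Interaction.apply, eq_comm] using h.1

lemma Bi.of_free {i : Interaction} {a b : Bool} (h : Bi i a b) (hi : i = .free) :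
    a = false ∧ b = false := by
  subst hi
  revert h
  cases a <;> cases b <;> simp [Bi, Interaction.apply]

lemma Bi.ne_swap {i : Interaction} {a : Bool} (h : Bi i a a) : i ≠ .swap := by
  revert h
  cases i <;> cases a <;> simp [Bi, Interaction.apply]

/-- A bidirectional edge at both supports excludes the constant and the partial interactions. -/
lemma Bi.eq_nop {i : Interaction} (h : Bi i false false) (h' : Bi i true true) : i = .nop := by
  revert h h'
  cases i <;> simp [Bi, Interaction.apply]

/-- Two consecutive `z`-edges cancel, so the `y`-edges around them cancel as well. -/
lemma loop_ne_swap_s13 {y z a : Interaction} {s₁ s₂ s₃ s₄ s₅ s₆ : Bool}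
    (h₁ : s₁ = false) (hy : Bi y s₁ s₂) (hz : z.apply s₂ = some s₃) (hz' : Bi z s₃ s₄)
    (hy' : Bi y s₄ s₅) (ha : Bi a s₅ s₆) (h₆ : s₆ = false) (hzs : z = .nop ∨ z = .swap) :
    a ≠ .swap := by
  have h42 : s₄ = s₂ := by
    revert hz hz'
    rcases hzs with rfl | rfl <;> cases s₂ <;> cases s₃ <;> cases s₄ <;>
      simp [Bi, Interaction.apply]
  have h51 : s₅ = s₁ := by
    subst h42
    by_cases hs : y = .swap
    · rw [hy'.of_swap hs, hy.of_swap hs, Bool.not_not]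
    · rw [hy.eq_of_ne_swap hs, hy'.eq_of_ne_swap hs]
  subst h51 h₁ h₆
  exact ha.ne_swap

/-- A segment `a, x, x, a` of `T'_{i,0}` can raise the support only if `x` is `res`. -/
lemma segment_false {a x : Interaction} {s₂ s₃ s₄ s₅ s₆ : Bool} (h₂ : s₂ = false)
    (ha : Bi a s₂ s₃) (hx : Bi x s₃ s₄) (hx' : x.apply s₅ = some s₄) (ha' : Bi a s₅ s₆)
    (has : a ≠ .swap) (hres : x ≠ .res) : s₆ = false := by
  have h₃ := ha.eq_of_ne_swap has
  have h₅ := ha'.eq_of_ne_swap has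
  subst h₃ h₅ h₂
  revert hx hx' hres
  cases x <;> cases s₄ <;> cases s₅ <;> simp [Bi, Interaction.apply]

lemma Bi.not_res_res {x v x' : Interaction} {s₀ s₁ s₂ s₃ : Bool} (hx : Bi x s₀ s₁)
    (hv : Bi v s₁ s₂) (hx' : Bi x' s₂ s₃) (hvs : v = .swap) : ¬ (x = .res ∧ x' = .res) := by
  rintro ⟨rfl, rfl⟩
  have h := hv.of_swap hvs
  simp [Bi, Interaction.apply] at hx hx'
  simp [hx, hx'] at h

section Gadgets

variable {V : Type} [DecidableEq V] {m : ℕ} {X : Fin m → Fin 3 → V} {τ : Set Interaction}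

/-- The supports at the ends of a bidirectional edge of a gadget satisfy `Bi`. -/
lemma bi_edge (R : URegion τ (gadget m X true)) (g : GIdx m) (s s' : GS m g) (e : GEvent V m)
    (h : (gadget m X true g).delta s e = some s' ∧ (gadget m X true g).delta s' e = some s) :
    Bi (R.sig e) (R.sup ⟨g, s⟩) (R.sup ⟨g, s'⟩) :=
  ⟨R.consistent g s e s' h.1, R.consistent g s' e s h.2⟩

lemma sup_k (R : URegion τ (gadget m X true)) (hk : R.sig .k = .free) (g : GIdx m)
    (s s' : GS m g)
    (h : (gadget m X true g).delta s .k = some s' ∧ (gadget m X true g).delta s' .k = some s) :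
    R.sup ⟨g, s⟩ = false ∧ R.sup ⟨g, s'⟩ = false :=
  (bi_edge R g s s' .k h).of_free hk

lemma sig_mev (hm : 0 < m) (R : URegion τ (gadget m X true))
    (hinh : (R.sig GEvent.k).apply (R.sup (h02 hm)) = none) (hk : R.sig .k = .free) :
    R.sig .mev = .swap := by
  have h01 := (sup_k R hk (.H (hidx hm)) (0 : Fin 6) (1 : Fin 6) (by constructor <;> rfl)).2
  have h12 := bi_edge R (.H (hidx hm)) (1 : Fin 6) (2 : Fin 6) .mev (by constructor <;> rfl)
  refine h12.eq_swap ?_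
  rw [h01]
  intro h
  rw [hk] at hinh
  change Interaction.free.apply (R.sup ⟨.H (hidx hm), (2 : Fin 6)⟩) = none at hinh
  rw [← h] at hinh
  simp [Interaction.apply] at hinh

lemma sig_v (R : URegion τ (gadget m X true)) (hk : R.sig .k = .free)
    (hmev : R.sig .mev = .swap) (j : Fin (4 * m)) : R.sig (.v j) = .swap := by
  have h1 := (sup_k R hk (.H j) (0 : Fin 6) (1 : Fin 6) (by constructor <;> rfl)).2
  have h3 := (sup_k R hk (.H j) (3 : Fin 6) (4 : Fin 6)
    (by constructor <;> simp [gadget, chainTS, chainDelta, echk, Dir.allowsFwd, Dir.allowsBwd] <;> rfl)).1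
  have h12 := bi_edge R (.H j) (1 : Fin 6) (2 : Fin 6) .mev (by constructor <;> rfl)
  have h23 := bi_edge R (.H j) (2 : Fin 6) (3 : Fin 6) (.v j)
    (by constructor <;> simp [gadget, chainTS, chainDelta, echk, Dir.allowsFwd, Dir.allowsBwd] <;> rfl)
  refine h23.eq_swap ?_
  rw [h12.of_swap hmev, h1, h3]
  simp

lemma sig_q1 (R : URegion τ (gadget m X true)) (hk : R.sig .k = .free)
    (hmev : R.sig .mev = .swap) : R.sig (.q 1) = .swap := by
  have h4 := (sup_k R hk .F0 (3 : Fin 9) (4 : Fin 9) (by constructor <;> rfl)).2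
  have h6 := (sup_k R hk .F0 (6 : Fin 9) (7 : Fin 9) (by constructor <;> rfl)).1
  have h45 := bi_edge R .F0 (4 : Fin 9) (5 : Fin 9) .mev (by constructor <;> rfl)
  have h56 := bi_edge R .F0 (5 : Fin 9) (6 : Fin 9) (.q 1) (by constructor <;> rfl)
  refine h56.eq_swap ?_
  rw [h45.of_swap hmev, h4, h6]
  simp

/-- If `z` is not `swap`, the two `z`-edges of `F_2` lie at different supports, since the `q_1`-edge
between them toggles the support; only `nop` fits both. -/
lemma sig_z_s13 (R : URegion τ (gadget m X true)) (hk : R.sig .k = .free)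
    (hmev : R.sig .mev = .swap) : R.sig .z = .nop ∨ R.sig .z = .swap := by
  by_cases hz : R.sig .z = .swap
  · exact .inr hz
  left
  have f34 := bi_edge R .F2 (3 : Fin 10) (4 : Fin 10) .z (by constructor <;> rfl)
  have f45 := bi_edge R .F2 (4 : Fin 10) (5 : Fin 10) (.q 1) (by constructor <;> rfl)
  have f56 := bi_edge R .F2 (5 : Fin 10) (6 : Fin 10) .z (by constructor <;> rfl)
  rw [f34.eq_of_ne_swap hz] at f34
  rw [← f56.eq_of_ne_swap hz, f45.of_swap (sig_q1 R hk hmev)] at f56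
  cases h : R.sup ⟨.F2, (4 : Fin 10)⟩
  · rw [h] at f34 f56
    exact f34.eq_nop f56
  · rw [h] at f34 f56
    exact Bi.eq_nop f56 f34

lemma sig_w_ne (R : URegion τ (gadget m X true)) (hk : R.sig .k = .free)
    (hz : R.sig .z = .nop ∨ R.sig .z = .swap) (j : Fin m) : R.sig (.w j) ≠ .swap := by
  refine loop_ne_swap_s13
    (sup_k R hk (.G j) (0 : Fin 9) (1 : Fin 9) ?_).2
    (bi_edge R (.G j) (1 : Fin 9) (2 : Fin 9) (.y j) ?_)
    (R.consistent (.G j) (2 : Fin 9) .z (3 : Fin 9) ?_)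
    (bi_edge R (.G j) (3 : Fin 9) (4 : Fin 9) .z ?_)
    (bi_edge R (.G j) (4 : Fin 9) (5 : Fin 9) (.y j) ?_)
    (bi_edge R (.G j) (5 : Fin 9) (6 : Fin 9) (.w j) ?_)
    (sup_k R hk (.G j) (6 : Fin 9) (7 : Fin 9) ?_).1 hz
  all_goals simp [gadget, chainTS, chainDelta, echk, Dir.allowsFwd, Dir.allowsBwd]
  all_goals first | rfl | exact ⟨rfl, rfl⟩

lemma sig_a_ne (R : URegion τ (gadget m X true)) (hk : R.sig .k = .free)
    (hz : R.sig .z = .nop ∨ R.sig .z = .swap) (l : Fin (3 * m)) : R.sig (.a l) ≠ .swap := by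
  refine loop_ne_swap_s13
    (sup_k R hk (.D l) (0 : Fin 9) (1 : Fin 9) ?_).2
    (bi_edge R (.D l) (1 : Fin 9) (2 : Fin 9) (.p l) ?_)
    (R.consistent (.D l) (2 : Fin 9) .z (3 : Fin 9) ?_)
    (bi_edge R (.D l) (3 : Fin 9) (4 : Fin 9) .z ?_)
    (bi_edge R (.D l) (4 : Fin 9) (5 : Fin 9) (.p l) ?_)
    (bi_edge R (.D l) (5 : Fin 9) (6 : Fin 9) (.a l) ?_)
    (sup_k R hk (.D l) (6 : Fin 9) (7 : Fin 9) ?_).1 hz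
  all_goals simp [gadget, chainTS, chainDelta, echk, Dir.allowsFwd, Dir.allowsBwd]
  all_goals first | rfl | exact ⟨rfl, rfl⟩

/-- Without a `res` variable the support of `T'_{i,0}` would still be `0` before `v_{4i}`, and the
`swap` of `v_{4i}` would contradict `sig k = free`. -/
lemma exists_res (R : URegion τ (gadget m X true)) (hk : R.sig .k = .free) (i : Fin m)
    (hw : R.sig (.w i) ≠ .swap) (ha : ∀ l, R.sig (.a l) ≠ .swap)
    (hv : R.sig (.v (fmul4 i 0)) = .swap) : ∃ r : Fin 3, R.sig (.x (X i r)) = .res := by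
  by_contra! hr
  have t1 := (sup_k R hk (.T0 i) (0 : Fin 18) (1 : Fin 18) (by constructor <;> rfl)).2
  have t12 := bi_edge R (.T0 i) (1 : Fin 18) (2 : Fin 18) (.w i) (by
    constructor <;> simp [gadget, chainTS, chainDelta, echk, Dir.allowsFwd, Dir.allowsBwd] <;> rfl)
  have t2 : R.sup ⟨.T0 i, (2 : Fin 18)⟩ = false := by rw [← t12.eq_of_ne_swap hw, t1]
  have t6 : R.sup ⟨.T0 i, (6 : Fin 18)⟩ = false := by
    refine segment_false t2
      (bi_edge R (.T0 i) (2 : Fin 18) (3 : Fin 18) (.a (fmul3 i 0)) ?_)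
      (bi_edge R (.T0 i) (3 : Fin 18) (4 : Fin 18) (.x (X i 0)) ?_)
      (R.consistent (.T0 i) (5 : Fin 18) (.x (X i 0)) (4 : Fin 18) ?_)
      (bi_edge R (.T0 i) (5 : Fin 18) (6 : Fin 18) (.a (fmul3 i 0)) ?_) (ha _) (hr 0)
    all_goals simp [gadget, chainTS, chainDelta, echk, Dir.allowsFwd, Dir.allowsBwd, fmul3]
    all_goals first | rfl | exact ⟨rfl, rfl⟩
  have t10 : R.sup ⟨.T0 i, (10 : Fin 18)⟩ = false := by
    refine segment_false t6
      (bi_edge R (.T0 i) (6 : Fin 18) (7 : Fin 18) (.a (fmul3 i 1)) ?_)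
      (bi_edge R (.T0 i) (7 : Fin 18) (8 : Fin 18) (.x (X i 1)) ?_)
      (R.consistent (.T0 i) (9 : Fin 18) (.x (X i 1)) (8 : Fin 18) ?_)
      (bi_edge R (.T0 i) (9 : Fin 18) (10 : Fin 18) (.a (fmul3 i 1)) ?_) (ha _) (hr 1)
    all_goals simp [gadget, chainTS, chainDelta, echk, Dir.allowsFwd, Dir.allowsBwd, fmul3]
    all_goals first | rfl | exact ⟨rfl, rfl⟩
  have t14 : R.sup ⟨.T0 i, (14 : Fin 18)⟩ = false := by
    refine segment_false t10
      (bi_edge R (.T0 i) (10 : Fin 18) (11 : Fin 18) (.a (fmul3 i 2)) ?_)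
      (bi_edge R (.T0 i) (11 : Fin 18) (12 : Fin 18) (.x (X i 2)) ?_)
      (R.consistent (.T0 i) (13 : Fin 18) (.x (X i 2)) (12 : Fin 18) ?_)
      (bi_edge R (.T0 i) (13 : Fin 18) (14 : Fin 18) (.a (fmul3 i 2)) ?_) (ha _) (hr 2)
    all_goals simp [gadget, chainTS, chainDelta, echk, Dir.allowsFwd, Dir.allowsBwd, fmul3]
    all_goals first | rfl | exact ⟨rfl, rfl⟩
  have t1415 := bi_edge R (.T0 i) (14 : Fin 18) (15 : Fin 18) (.v (fmul4 i 0)) (by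
    constructor <;> simp [gadget, chainTS, chainDelta, echk, Dir.allowsFwd, Dir.allowsBwd] <;> rfl)
  have t15 := (sup_k R hk (.T0 i) (15 : Fin 18) (16 : Fin 18) (by
    constructor <;> simp [gadget, chainTS, chainDelta, echk, Dir.allowsFwd, Dir.allowsBwd] <;> rfl)).1
  have h := t1415.of_swap hv
  rw [t14, t15] at h
  simp at h

/-- No two positions of a clause carry `res` variables. -/
lemma not_two_res (R : URegion τ (gadget m X true)) (hv : ∀ j, R.sig (.v j) = .swap)
    (i : Fin m) :
    ¬ (R.sig (.x (X i 0)) = .res ∧ R.sig (.x (X i 1)) = .res) ∧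
    ¬ (R.sig (.x (X i 0)) = .res ∧ R.sig (.x (X i 2)) = .res) ∧
    ¬ (R.sig (.x (X i 1)) = .res ∧ R.sig (.x (X i 2)) = .res) := by
  refine ⟨Bi.not_res_res
      (bi_edge R (.T1 i) (0 : Fin 5) (1 : Fin 5) (.x (X i 0)) ?_)
      (bi_edge R (.T1 i) (1 : Fin 5) (2 : Fin 5) (.v (fmul4 i 1)) ?_)
      (bi_edge R (.T1 i) (2 : Fin 5) (3 : Fin 5) (.x (X i 1)) ?_) (hv _),
    Bi.not_res_res
      (bi_edge R (.T2 i) (0 : Fin 5) (1 : Fin 5) (.x (X i 0)) ?_)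
      (bi_edge R (.T2 i) (1 : Fin 5) (2 : Fin 5) (.v (fmul4 i 2)) ?_)
      (bi_edge R (.T2 i) (2 : Fin 5) (3 : Fin 5) (.x (X i 2)) ?_) (hv _),
    Bi.not_res_res
      (bi_edge R (.T3 i) (0 : Fin 5) (1 : Fin 5) (.x (X i 1)) ?_)
      (bi_edge R (.T3 i) (1 : Fin 5) (2 : Fin 5) (.v (fmul4 i 3)) ?_)
      (bi_edge R (.T3 i) (2 : Fin 5) (3 : Fin 5) (.x (X i 2)) ?_) (hv _)⟩
  all_goals simp [gadget, chainTS, chainDelta, echk, Dir.allowsFwd, Dir.allowsBwd]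
  all_goals first | rfl | exact ⟨rfl, rfl⟩

end Gadgets

/-- For `τ ∈ σ2`, if a `τ`-region of `U^{σ2}_φ` inhibits `k` at
`h_{0,2}` with `sig k = free`, then `{X ∈ V(φ) : sig X = res}` is a one-in-three
model of `φ`. -/
theorem sigma2_free_res_model {V : Type} [Fintype V] [DecidableEq V]
    (m : ℕ) (hm : 0 < m) (X : Fin m → Fin 3 → V) (hφ : Cubic m X)
    (τ : Set Interaction) (hτ : sigma2mem τ)
    (R : URegion τ (gadget m X true))
    (hinh : (R.sig GEvent.k).apply (R.sup (h02 hm)) = none)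
    (hk : R.sig GEvent.k = Interaction.free) :
    OneInThree m X {vv : V | R.sig (GEvent.x vv) = Interaction.res} := by
  have hmev := sig_mev hm R hinh hk
  have hv := sig_v R hk hmev
  have hz := sig_z_s13 R hk hmev
  intro i
  obtain ⟨r, hr⟩ := exists_res R hk i (sig_w_ne R hk hz i) (sig_a_ne R hk hz) (hv _)
  obtain ⟨h01, h02, h12⟩ := not_two_res R hv i
  refine ⟨r, hr, fun r' hr' => ?_⟩
  simp only [Set.mem_ofPred_eq] at hr'
  fin_cases r <;> fin_cases r' <;> simp_all

end PetriNets
end
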